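/- Let G be a subgroup of PL₊(I) generated by a finite set X. The following are equivalent: (1) G is not soluble; (2) G admits a transition chain; (3) G admits a pair of element orbitals sharing exactly one endpoint (a 'one-sided overlap'); (4) G admits a tower of infinite height. -/

import Mathlib

open Set

namespace PLPaper

/-- We model `PL₊(I)` inside the group of bijections of `ℝ` with *opposite*
composition, so that the group acts on `ℝ` on the right:
`x · (g * h) = (x · g) · h`. -/
abbrev PermR : Type := (Equiv.Perm ℝ)ᵐᵒᵖ

/-- The (right) action of `g` on the point `x`. -/
def ap (g : PermR) (x : ℝ) : ℝ := g.unop x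

/-- `g` is affine on a neighbourhood of `x`. -/
def IsLocallyAffineAt (g : PermR) (x : ℝ) : Prop :=
  ∃ m b : ℝ, ∀ᶠ y in nhds x, ap g y = m * y + b

/-- The breakpoints of `g`: points of `(0,1)` where `g` is not locally affine
(equivalently, for a PL map, where the derivative fails to exist). -/
def Breakpoints (g : PermR) : Set ℝ :=
  {x ∈ Ioo (0:ℝ) 1 | ¬ IsLocallyAffineAt g x}

/-- `g` is an orientation-preserving piecewise-linear homeomorphism of `[0,1]`
(extended by the identity to all of `ℝ`), with finitely many breakpoints. -/
def IsPL (g : PermR) : Prop :=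
  StrictMono (ap g) ∧ (∀ x ∉ Ioo (0:ℝ) 1, ap g x = x) ∧ (Breakpoints g).Finite

/-- The support of `g`. -/
def Supp (g : PermR) : Set ℝ := {x | ap g x ≠ x}

/-- `(a,b)` is an orbital of `g`, i.e. a connected component of `Supp g`. -/
def IsOrbital (g : PermR) (a b : ℝ) : Prop :=
  a < b ∧ Ioo a b ⊆ Supp g ∧ a ∉ Supp g ∧ b ∉ Supp g

/-- The support of a subgroup `G`. -/
def GSupp (G : Subgroup PermR) : Set ℝ := ⋃ g ∈ (G : Set PermR), Supp g

/-- `(a,b)` is an orbital of the group `G`, i.e. a connected component of its support. -/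
def IsGroupOrbital (G : Subgroup PermR) (a b : ℝ) : Prop :=
  a < b ∧ Ioo a b ⊆ GSupp G ∧ a ∉ GSupp G ∧ b ∉ GSupp G

/-- The pair `g, h` carries a transition chain: orbitals `(a,b)` of `g` and
`(c,d)` of `h` with `a < c < b < d`. -/
def ElemsTransitionChain (g h : PermR) : Prop :=
  ∃ a b c d : ℝ, IsOrbital g a b ∧ IsOrbital h c d ∧ a < c ∧ c < b ∧ b < d

/-- The pair `g, h` carries a one-sided overlap: orbitals `(a,b)` of `g` and
`(a,c)` of `h`, or `(a,b)` of `g` and `(c,b)` of `h`, where `a < c < b`. -/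
def ElemsOneSidedOverlap (g h : PermR) : Prop :=
  ∃ a b c : ℝ, a < c ∧ c < b ∧
    ((IsOrbital g a b ∧ IsOrbital h a c) ∨ (IsOrbital g a b ∧ IsOrbital h c b))

def AdmitsTransitionChain (G : Subgroup PermR) : Prop :=
  ∃ g ∈ G, ∃ h ∈ G, ElemsTransitionChain g h

def AdmitsOneSidedOverlap (G : Subgroup PermR) : Prop :=
  ∃ g ∈ G, ∃ h ∈ G, ElemsOneSidedOverlap g h

/-- `G` admits a bad overlap: orbitals `A` of `f ∈ G` and `B` of `g ∈ G` which
intersect, are distinct, and neither closure is contained in the other orbital. -/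
def AdmitsBadOverlap (G : Subgroup PermR) : Prop :=
  ∃ f ∈ G, ∃ g ∈ G, ∃ a b c d : ℝ, IsOrbital f a b ∧ IsOrbital g c d ∧
    (Ioo a b ∩ Ioo c d).Nonempty ∧ Ioo a b ≠ Ioo c d ∧
    ¬ Icc a b ⊆ Ioo c d ∧ ¬ Icc c d ⊆ Ioo a b

/-- A tower: a set of signed orbitals `((a,b), g)` with pairwise nested orbitals,
where equal orbitals force equal signatures. -/
def IsTower (T : Set ((ℝ × ℝ) × PermR)) : Prop :=
  (∀ p ∈ T, IsOrbital p.2 p.1.1 p.1.2) ∧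
  (∀ p ∈ T, ∀ q ∈ T,
      Ioo p.1.1 p.1.2 ⊆ Ioo q.1.1 q.1.2 ∨ Ioo q.1.1 q.1.2 ⊆ Ioo p.1.1 p.1.2) ∧
  (∀ p ∈ T, ∀ q ∈ T, p.1 = q.1 → p.2 = q.2)

/-- `G` admits the tower `T` if `T` is a tower all of whose signatures lie in `G`. -/
def AdmitsTower (G : Subgroup PermR) (T : Set ((ℝ × ℝ) × PermR)) : Prop :=
  IsTower T ∧ ∀ p ∈ T, p.2 ∈ G

def AdmitsInfiniteTower (G : Subgroup PermR) : Prop :=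
  ∃ T : Set ((ℝ × ℝ) × PermR), AdmitsTower G T ∧ T.Infinite

/-- The set of breakpoints of the elements of a set `S`. -/
def BreakSet (S : Set PermR) : Set ℝ := ⋃ g ∈ S, Breakpoints g

/-- The derived length of a group: the least `n` with `derivedSeries G n = ⊥`. -/
noncomputable def derivedLength (G : Type*) [Group G] : ℕ :=
  sInf {n : ℕ | derivedSeries G n = ⊥}

open Filter Topology
open scoped commutatorElement

/-! ### Basic facts about the action -/

lemma ap_mul (g h : PermR) (x : ℝ) : ap (g * h) x = ap h (ap g x) := rfl

lemma ap_one (x : ℝ) : ap 1 x = x := rfl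

lemma ap_inv_ap (g : PermR) (x : ℝ) : ap g⁻¹ (ap g x) = x := by
  rw [← ap_mul, mul_inv_cancel, ap_one]

lemma ap_ap_inv (g : PermR) (x : ℝ) : ap g (ap g⁻¹ x) = x := by
  rw [← ap_mul, inv_mul_cancel, ap_one]

lemma ap_inj (g : PermR) : Function.Injective (ap g) := g.unop.injective

lemma ap_surj (g : PermR) : Function.Surjective (ap g) := g.unop.surjective

lemma ext_ap {g h : PermR} (H : ∀ x, ap g x = ap h x) : g = h := by
  apply MulOpposite.unop_injective
  exact Equiv.ext H

lemma ap_inv_fix {g : PermR} {x : ℝ} (h : ap g x = x) : ap g⁻¹ x = x := by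
  conv_lhs => rw [← h]
  exact ap_inv_ap g x

lemma IsPL.mono {g : PermR} (h : IsPL g) : StrictMono (ap g) := h.1

lemma IsPL.cont {g : PermR} (h : IsPL g) : Continuous (ap g) :=
  h.1.monotone.continuous_of_surjective (ap_surj g)

lemma notMem_supp {g : PermR} {x : ℝ} : x ∉ Supp g ↔ ap g x = x := by
  simp [Supp]

lemma mem_supp {g : PermR} {x : ℝ} : x ∈ Supp g ↔ ap g x ≠ x := Iff.rfl

lemma IsOrbital.lt {g : PermR} {a b : ℝ} (h : IsOrbital g a b) : a < b := h.1
lemma IsOrbital.mv {g : PermR} {a b x : ℝ} (h : IsOrbital g a b) (h1 : a < x) (h2 : x < b) :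
    ap g x ≠ x := h.2.1 ⟨h1, h2⟩
lemma IsOrbital.fl {g : PermR} {a b : ℝ} (h : IsOrbital g a b) : ap g a = a :=
  notMem_supp.1 h.2.2.1
lemma IsOrbital.fr {g : PermR} {a b : ℝ} (h : IsOrbital g a b) : ap g b = b :=
  notMem_supp.1 h.2.2.2

lemma mkOrb {g : PermR} {a b : ℝ} (h : a < b) (h1 : ∀ x, a < x → x < b → ap g x ≠ x)
    (h2 : ap g a = a) (h3 : ap g b = b) : IsOrbital g a b :=
  ⟨h, fun x hx => h1 x hx.1 hx.2, notMem_supp.2 h2, notMem_supp.2 h3⟩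

/-- Gaps of a closed set. -/
lemma gap {Z : Set ℝ} (hZ : IsClosed Z) {a b x : ℝ} (ha : a ∈ Z) (hb : b ∈ Z) (hax : a ≤ x)
    (hxb : x ≤ b) (hx : x ∉ Z) :
    ∃ c d, a ≤ c ∧ c < x ∧ x < d ∧ d ≤ b ∧ c ∈ Z ∧ d ∈ Z ∧ ∀ y, c < y → y < d → y ∉ Z := by
  have k1 : IsCompact (Z ∩ Icc a x) := isCompact_Icc.inter_left hZ
  have k2 : IsCompact (Z ∩ Icc x b) := isCompact_Icc.inter_left hZ
  obtain ⟨c, hc⟩ := k1.exists_isGreatest ⟨a, ha, le_rfl, hax⟩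
  obtain ⟨d, hd⟩ := k2.exists_isLeast ⟨b, hb, hxb, le_rfl⟩
  have hcx : c < x := lt_of_le_of_ne hc.1.2.2 (fun h => hx (h ▸ hc.1.1))
  have hxd : x < d := lt_of_le_of_ne hd.1.2.1 (fun h => hx (h ▸ hd.1.1))
  refine ⟨c, d, hc.1.2.1, hcx, hxd, hd.1.2.2, hc.1.1, hd.1.1, fun y h1 h2 hy => ?_⟩
  rcases le_total y x with h | h
  · exact absurd (hc.2 ⟨hy, hc.1.2.1.trans h1.le, h⟩) (not_le.2 h1)
  · exact absurd (hd.2 ⟨hy, h, h2.le.trans hd.1.2.2⟩) (not_le.2 h2)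

lemma IsPL.closed_fix {g : PermR} (h : IsPL g) : IsClosed {x | ap g x = x} :=
  isClosed_eq h.cont continuous_id

lemma IsPL.fix_le {g : PermR} (h : IsPL g) {x : ℝ} (hx : x ≤ 0) : ap g x = x :=
  h.2.1 x (fun k => absurd k.1 (not_lt.2 hx))

lemma IsPL.fix_ge {g : PermR} (h : IsPL g) {x : ℝ} (hx : 1 ≤ x) : ap g x = x :=
  h.2.1 x (fun k => absurd k.2 (not_lt.2 hx))

lemma IsPL.mem_of_mv {g : PermR} (h : IsPL g) {x : ℝ} (hx : ap g x ≠ x) : 0 < x ∧ x < 1 := by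
  by_contra hc
  exact hx (h.2.1 x hc)

lemma exists_orbital {g : PermR} (h : IsPL g) {x : ℝ} (hx : ap g x ≠ x) :
    ∃ a b, IsOrbital g a b ∧ a < x ∧ x < b := by
  obtain ⟨h0, h1⟩ := h.mem_of_mv hx
  obtain ⟨c, d, -, hc, hd, -, hcZ, hdZ, H⟩ := gap h.closed_fix (a := 0) (b := 1) (x := x)
    (h.fix_le le_rfl) (h.fix_ge le_rfl) h0.le h1.le hx
  exact ⟨c, d, mkOrb (hc.trans hd) H hcZ hdZ, hc, hd⟩

/-- fixed points to the left of a point of an orbital are left of the orbital -/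
lemma IsOrbital.le_left {g : PermR} {a b p x : ℝ} (h : IsOrbital g a b) (hp : ap g p = p)
    (hx : x < b) (hpx : p ≤ x) : p ≤ a := by
  by_contra hc
  exact h.mv (not_le.1 hc) (hpx.trans_lt hx) hp

lemma IsOrbital.right_le {g : PermR} {a b p x : ℝ} (h : IsOrbital g a b) (hp : ap g p = p)
    (hx : a < x) (hpx : x ≤ p) : b ≤ p := by
  by_contra hc
  exact h.mv (hx.trans_le hpx) (not_le.1 hc) hp

lemma IsOrbital.unique {g : PermR} {a b c d x : ℝ} (h : IsOrbital g a b) (h' : IsOrbital g c d)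
    (h1 : a < x) (h2 : x < b) (h3 : c < x) (h4 : x < d) : a = c ∧ b = d :=
  ⟨le_antisymm (h'.le_left h.fl h4 h1.le) (h.le_left h'.fl h2 h3.le),
   le_antisymm (h.right_le h'.fr h1 h4.le) (h'.right_le h.fr h3 h2.le)⟩

lemma IsOrbital.bounds {g : PermR} {a b : ℝ} (h : IsOrbital g a b) (hg : IsPL g) :
    0 ≤ a ∧ b ≤ 1 := by
  obtain ⟨x, h1, h2⟩ := exists_between h.lt
  obtain ⟨h3, h4⟩ := hg.mem_of_mv (h.mv h1 h2)
  exact ⟨h.le_left (hg.fix_le le_rfl) h2 h3.le, h.right_le (hg.fix_ge le_rfl) h1 h4.le⟩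

lemma IsOrbital.conj {g f : PermR} {a b : ℝ} (h : IsOrbital g a b) (hf : StrictMono (ap f)) :
    IsOrbital (f⁻¹ * g * f) (ap f a) (ap f b) := by
  refine mkOrb (hf h.lt) ?_ ?_ ?_
  · intro x hx1 hx2 hx
    obtain ⟨y, rfl⟩ := ap_surj f x
    rw [ap_mul, ap_mul, ap_inv_ap] at hx
    exact h.mv (hf.lt_iff_lt.1 hx1) (hf.lt_iff_lt.1 hx2) (ap_inj f hx)
  · rw [ap_mul, ap_mul, ap_inv_ap, h.fl]
  · rw [ap_mul, ap_mul, ap_inv_ap, h.fr]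

lemma IsOrbital.inv {g : PermR} {a b : ℝ} (h : IsOrbital g a b) : IsOrbital g⁻¹ a b := by
  refine mkOrb h.lt (fun x h1 h2 h3 => h.mv h1 h2 ?_) (ap_inv_fix h.fl) (ap_inv_fix h.fr)
  have := ap_inv_fix h3
  rwa [inv_inv] at this

/-! ### Piecewise linearity -/

lemma affine_on {g : PermR} (hg : IsPL g) {x y : ℝ} (hxy : x < y) (h0 : 0 ≤ x) (h1 : y ≤ 1)
    (hb : ∀ z, x < z → z < y → z ∉ Breakpoints g) :
    ∃ m b : ℝ, ∀ z ∈ Icc x y, ap g z = m * z + b := by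
  have loc : ∀ z ∈ Ioo x y, ∃ m b : ℝ, ∀ᶠ w in 𝓝 z, ap g w = m * w + b := by
    intro z hz
    by_contra hc
    exact hb z hz.1 hz.2 ⟨⟨h0.trans_lt hz.1, hz.2.trans_le h1⟩, hc⟩
  choose! m b hmb using loc
  have key : ∀ z ∈ Ioo x y, ∀ w ∈ Ioo x y, m z = m w ∧ b z = b w := by
    intro z hz w hw
    refine (isPreconnected_Ioo (a := x) (b := y)).induction₂
      (fun z w => m z = m w ∧ b z = b w) ?_ ?_ ?_ hz hw
    · intro z hz
      have e1 : ∀ᶠ w in 𝓝 z, ∀ᶠ v in 𝓝 w, ap g v = m z * v + b z :=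
        eventually_eventually_nhds.2 (hmb z hz)
      filter_upwards [e1.filter_mono nhdsWithin_le_nhds, self_mem_nhdsWithin] with w hw hws
      have e2 := hw.and (hmb w hws)
      have e3 : ap g w = m z * w + b z ∧ ap g w = m w * w + b w := e2.self_of_nhds
      have e4 : ∃ v, w < v ∧ ap g v = m z * v + b z ∧ ap g v = m w * v + b w := by
        have := (e2.filter_mono (nhdsWithin_le_nhds (s := Ioi w))).and self_mem_nhdsWithin
        obtain ⟨v, hv, hv2⟩ := this.exists
        exact ⟨v, hv2, hv⟩
      obtain ⟨v, hv, hv1, hv2⟩ := e4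
      have hm : m z = m w := by
        have : (m z - m w) * (v - w) = 0 := by
          have := e3.1; have := e3.2; linarith [e3.1, e3.2]
        rcases mul_eq_zero.1 this with h | h
        · linarith
        · linarith
      refine ⟨hm, ?_⟩
      have := e3.1; have := e3.2
      rw [hm] at *
      linarith
    · intro a1 a2 a3 _ _ _ h h'
      exact ⟨h.1.trans h'.1, h.2.trans h'.2⟩
    · intro a1 a2 _ _ h
      exact ⟨h.1.symm, h.2.symm⟩
  obtain ⟨z0, hz0⟩ := exists_between hxy
  refine ⟨m z0, b z0, ?_⟩
  have hE : EqOn (ap g) (fun z => m z0 * z + b z0) (Ioo x y) := by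
    intro z hz
    have := (hmb z hz).self_of_nhds
    obtain ⟨e1, e2⟩ := key z hz z0 hz0
    simp only
    rw [this, e1, e2]
  have hE2 := hE.closure hg.cont (by fun_prop)
  rw [closure_Ioo hxy.ne] at hE2
  exact hE2

lemma eq_id_of_no_break {g : PermR} (hg : IsPL g) {x y : ℝ} (hxy : x < y) (h0 : 0 ≤ x)
    (h1 : y ≤ 1) (hb : ∀ z, x < z → z < y → z ∉ Breakpoints g) (hx : ap g x = x)
    (hy : ap g y = y) : ∀ z, x ≤ z → z ≤ y → ap g z = z := by
  obtain ⟨m, b, H⟩ := affine_on hg hxy h0 h1 hb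
  have e1 := H x ⟨le_rfl, hxy.le⟩
  have e2 := H y ⟨hxy.le, le_rfl⟩
  rw [hx] at e1
  rw [hy] at e2
  have hm : m = 1 := by
    have : (m - 1) * (y - x) = 0 := by linarith
    rcases mul_eq_zero.1 this with h | h <;> linarith
  subst hm
  intro z h1 h2
  rw [H z ⟨h1, h2⟩]
  linarith

lemma IsOrbital.exists_break {g : PermR} (hg : IsPL g) {a b : ℝ} (h : IsOrbital g a b) :
    ∃ p ∈ Breakpoints g, a < p ∧ p < b := by
  by_contra! hc
  obtain ⟨x, h1, h2⟩ := exists_between h.lt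
  refine h.mv h1 h2 (eq_id_of_no_break hg h.lt (h.bounds hg).1 (h.bounds hg).2 ?_ h.fl h.fr
    x h1.le h2.le)
  intro z h3 h4 h5
  exact absurd h4 (not_lt.2 (hc z h5 h3))

lemma finite_left_ends {g : PermR} (hg : IsPL g) : {p | ∃ q, IsOrbital g p q}.Finite := by
  have : ∀ p ∈ {p | ∃ q, IsOrbital g p q}, ∃ x q, IsOrbital g p q ∧ x ∈ Breakpoints g ∧ p < x ∧
      x < q := by
    rintro p ⟨q, hq⟩
    obtain ⟨x, h1, h2, h3⟩ := hq.exists_break hg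
    exact ⟨x, q, hq, h1, h2, h3⟩
  choose! x q H using this
  refine Set.Finite.of_injOn (f := x) (t := Breakpoints g) (fun p hp => (H p hp).2.1) ?_ hg.2.2
  intro p hp p' hp' e
  have h := H p hp
  have h' := H p' hp'
  rw [← e] at h'
  exact (h.1.unique h'.1 h.2.2.1 h.2.2.2 h'.2.2.1 h'.2.2.2).1

/-- right germ at a point is affine -/
lemma germ_right {g : PermR} (hg : IsPL g) {p : ℝ} (hp : ap g p = p) :
    ∃ m : ℝ, ∀ᶠ y in 𝓝[>] p, ap g y = p + m * (y - p) := by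
  rcases lt_or_ge p 0 with h0 | h0
  · refine ⟨1, ?_⟩
    filter_upwards [Ioo_mem_nhdsGT h0] with y hy
    rw [hg.fix_le hy.2.le]; ring
  rcases le_or_gt 1 p with h1 | h1
  · refine ⟨1, ?_⟩
    filter_upwards [self_mem_nhdsWithin] with y hy
    rw [hg.fix_ge (h1.trans (le_of_lt hy))]; ring
  have hc : (Breakpoints g \ {p})ᶜ ∈ 𝓝 p :=
    (hg.2.2.subset sdiff_subset).isClosed.isOpen_compl.mem_nhds (by simp)
  obtain ⟨l, u, ⟨hl, hu⟩, H⟩ := mem_nhds_iff_exists_Ioo_subset.1 hc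
  have hpu : p < min u 1 := lt_min hu h1
  obtain ⟨m, b, hm⟩ := affine_on hg hpu h0 (min_le_right _ _) (by
    intro z hz1 hz2 hz
    exact H ⟨hl.trans hz1, hz2.trans_le (min_le_left _ _)⟩ ⟨hz, hz1.ne'⟩)
  refine ⟨m, ?_⟩
  filter_upwards [Ioo_mem_nhdsGT hpu] with y hy
  have e := hm p ⟨le_rfl, hpu.le⟩
  rw [hm y ⟨hy.1.le, hy.2.le⟩]
  linarith

lemma germ_left {g : PermR} (hg : IsPL g) {p : ℝ} (hp : ap g p = p) :
    ∃ m : ℝ, ∀ᶠ y in 𝓝[<] p, ap g y = p + m * (y - p) := by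
  rcases lt_or_ge 1 p with h0 | h0
  · refine ⟨1, ?_⟩
    filter_upwards [Ioo_mem_nhdsLT h0] with y hy
    rw [hg.fix_ge hy.1.le]; ring
  rcases le_or_gt p 0 with h1 | h1
  · refine ⟨1, ?_⟩
    filter_upwards [self_mem_nhdsWithin] with y hy
    rw [hg.fix_le ((le_of_lt hy).trans h1)]; ring
  have hc : (Breakpoints g \ {p})ᶜ ∈ 𝓝 p :=
    (hg.2.2.subset sdiff_subset).isClosed.isOpen_compl.mem_nhds (by simp)
  obtain ⟨l, u, ⟨hl, hu⟩, H⟩ := mem_nhds_iff_exists_Ioo_subset.1 hc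
  have hpu : max l 0 < p := max_lt hl h1
  obtain ⟨m, b, hm⟩ := affine_on hg hpu (le_max_right _ _) h0 (by
    intro z hz1 hz2 hz
    exact H ⟨(le_max_left _ _).trans_lt hz1, hz2.trans hu⟩ ⟨hz, hz2.ne⟩)
  refine ⟨m, ?_⟩
  filter_upwards [Ioo_mem_nhdsLT hpu] with y hy
  have e := hm p ⟨hpu.le, le_rfl⟩
  rw [hm y ⟨hy.1.le, hy.2.le⟩]
  linarith

/-- `g` is trivial on a right neighbourhood of `p`. -/
def TrivR (g : PermR) (p : ℝ) : Prop := ∀ᶠ y in 𝓝[>] p, ap g y = y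
/-- `g` is trivial on a left neighbourhood of `p`. -/
def TrivL (g : PermR) (p : ℝ) : Prop := ∀ᶠ y in 𝓝[<] p, ap g y = y

lemma IsPL.tendsto_right {g : PermR} (hg : IsPL g) {p : ℝ} (hp : ap g p = p) :
    Tendsto (ap g) (𝓝[>] p) (𝓝[>] p) := by
  refine tendsto_nhdsWithin_iff.2 ⟨?_, ?_⟩
  · have := hg.cont.tendsto p
    rw [hp] at this
    exact this.mono_left nhdsWithin_le_nhds
  · filter_upwards [self_mem_nhdsWithin] with y hy
    have := hg.mono (show p < y from hy)
    rwa [hp] at this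

lemma IsPL.tendsto_left {g : PermR} (hg : IsPL g) {p : ℝ} (hp : ap g p = p) :
    Tendsto (ap g) (𝓝[<] p) (𝓝[<] p) := by
  refine tendsto_nhdsWithin_iff.2 ⟨?_, ?_⟩
  · have := hg.cont.tendsto p
    rw [hp] at this
    exact this.mono_left nhdsWithin_le_nhds
  · filter_upwards [self_mem_nhdsWithin] with y hy
    have := hg.mono (show y < p from hy)
    rwa [hp] at this

lemma comm_triv {l : Filter ℝ} {g h : PermR} {p m n : ℝ} (hg : ∀ᶠ y in l, ap g y = p + m * (y - p))
    (hh : ∀ᶠ y in l, ap h y = p + n * (y - p)) (tg : Tendsto (ap g) l l)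
    (th : Tendsto (ap h) l l) : ∀ᶠ y in l, ap ⁅g, h⁆ y = y := by
  filter_upwards [hg, hh, tg.eventually hh, th.eventually hg] with y h1 h2 h3 h4
  have : ap h (ap g y) = ap g (ap h y) := by
    rw [h3, h4, h1, h2]; ring
  rw [commutatorElement_def, ap_mul, ap_mul, ap_mul, this, ap_inv_ap, ap_inv_ap]

lemma comm_trivR {g h : PermR} (hg : IsPL g) (hh : IsPL h) {p : ℝ} (h1 : ap g p = p)
    (h2 : ap h p = p) : TrivR ⁅g, h⁆ p := by
  obtain ⟨m, hm⟩ := germ_right hg h1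
  obtain ⟨n, hn⟩ := germ_right hh h2
  exact comm_triv hm hn (hg.tendsto_right h1) (hh.tendsto_right h2)

lemma comm_trivL {g h : PermR} (hg : IsPL g) (hh : IsPL h) {p : ℝ} (h1 : ap g p = p)
    (h2 : ap h p = p) : TrivL ⁅g, h⁆ p := by
  obtain ⟨m, hm⟩ := germ_left hg h1
  obtain ⟨n, hn⟩ := germ_left hh h2
  exact comm_triv hm hn (hg.tendsto_left h1) (hh.tendsto_left h2)

lemma TrivR.not_orb {g : PermR} {p q : ℝ} (h : TrivR g p) : ¬ IsOrbital g p q := by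
  intro h'
  obtain ⟨y, hy1, hy2⟩ := (h.and (Ioo_mem_nhdsGT h'.lt)).exists
  exact h'.mv hy2.1 hy2.2 hy1

lemma TrivL.not_orb {g : PermR} {p q : ℝ} (h : TrivL g p) : ¬ IsOrbital g q p := by
  intro h'
  obtain ⟨y, hy1, hy2⟩ := (h.and (Ioo_mem_nhdsLT h'.lt)).exists
  exact h'.mv hy2.1 hy2.2 hy1

lemma germ_alt {g : PermR} (hg : IsPL g) {p : ℝ} (hp : ap g p = p) :
    TrivR g p ∨ ∃ e, IsOrbital g p e := by
  obtain ⟨m, hm⟩ := germ_right hg hp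
  by_cases h1 : m = 1
  · left
    subst h1
    filter_upwards [hm] with y hy
    rw [hy]; ring
  right
  obtain ⟨u, hu, H⟩ := (mem_nhdsGT_iff_exists_Ioo_subset).1 hm
  have H2 : ∀ y, p < y → y < u → ap g y ≠ y := by
    intro y h2 h3 h4
    have h5 : ap g y = p + m * (y - p) := H ⟨h2, h3⟩
    rw [h4] at h5
    have : (m - 1) * (y - p) = 0 := by linarith
    rcases mul_eq_zero.1 this with h | h
    · exact h1 (by linarith)
    · linarith
  obtain ⟨y, hy1, hy2⟩ := exists_between (show p < u from hu)
  obtain ⟨a, b, hab, h3, h4⟩ := exists_orbital hg (H2 y hy1 hy2)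
  have h5 : p ≤ a := hab.le_left hp h4 hy1.le
  rcases h5.eq_or_lt with h | h
  · exact ⟨b, h ▸ hab⟩
  · exact absurd hab.fl (H2 a h (h3.trans hy2))

/-- a non-breakpoint which is the left end of an orbital is the right end of another one -/
lemma left_orbital {g : PermR} (hg : IsPL g) {p q : ℝ} (h : IsOrbital g p q) (h0 : 0 < p)
    (hb : p ∉ Breakpoints g) : ∃ e, IsOrbital g e p := by
  have hp1 : p < 1 := h.lt.trans_le (h.bounds hg).2
  have hA : IsLocallyAffineAt g p := by
    by_contra hc
    exact hb ⟨⟨h0, hp1⟩, hc⟩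
  obtain ⟨m, b, hm⟩ := hA
  have e0 : ap g p = m * p + b := hm.self_of_nhds
  rw [h.fl] at e0
  have hne : m ≠ 1 := by
    rintro rfl
    apply TrivR.not_orb (p := p) (q := q) _ h
    filter_upwards [hm.filter_mono nhdsWithin_le_nhds] with y hy
    rw [hy]; linarith
  obtain ⟨l, u, ⟨hl, hu⟩, H⟩ := mem_nhds_iff_exists_Ioo_subset.1 hm
  have H2 : ∀ y, l < y → y < p → ap g y ≠ y := by
    intro y h2 h3 h4
    have h5 : ap g y = m * y + b := H ⟨h2, h3.trans hu⟩
    rw [h4] at h5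
    have : (m - 1) * (y - p) = 0 := by linarith
    rcases mul_eq_zero.1 this with h | h
    · exact hne (by linarith)
    · linarith
  obtain ⟨y, hy1, hy2⟩ := exists_between hl
  obtain ⟨c, d, hcd, h3, h4⟩ := exists_orbital hg (H2 y hy1 hy2)
  have h5 : d ≤ p := hcd.right_le h.fl h3 hy2.le
  rcases h5.eq_or_lt with h' | h'
  · exact ⟨c, h' ▸ hcd⟩
  · exact absurd hcd.fr (H2 d (hy1.trans h4) h')

/-! ### Transition chains and one-sided overlaps -/

/-- All elements are piecewise linear. -/
def AllPL (G : Subgroup PermR) : Prop := ∀ g ∈ G, IsPL g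

/-- One sided overlap at the left end. -/
def LeftOverlap (G : Subgroup PermR) : Prop :=
  ∃ g ∈ G, ∃ h ∈ G, ∃ a b c : ℝ, a < c ∧ c < b ∧ IsOrbital g a b ∧ IsOrbital h a c

lemma leftOverlap_of_ne {G : Subgroup PermR} {g h : PermR} (hg : g ∈ G) (hh : h ∈ G) {a b c : ℝ}
    (h1 : IsOrbital g a b) (h2 : IsOrbital h a c) (hne : b ≠ c) : LeftOverlap G := by
  rcases lt_or_gt_of_ne hne with h' | h'
  · exact ⟨h, hh, g, hg, a, c, b, h1.lt, h', h2, h1⟩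
  · exact ⟨g, hg, h, hh, a, b, c, h2.lt, h', h1, h2⟩

lemma chain_aux {G : Subgroup PermR} (hG : AllPL G) {g h : PermR} (hg : g ∈ G) (hh : h ∈ G)
    {p e : ℝ} (hp : ap h p = p) (h1 : IsOrbital g p e) (he : ap h e ≠ e) : LeftOverlap G := by
  rcases germ_alt (hG h hh) hp with ht | ⟨z, hz⟩
  · have hpl := hG _ (G.mul_mem hg hh)
    have hpf : ap (g * h) p = p := by rw [ap_mul, h1.fl, hp]
    rcases germ_alt hpl hpf with ht' | ⟨z, hz⟩
    · exfalso
      apply TrivR.not_orb (p := p) (q := e) _ h1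
      have ht2 := ((hG g hg).tendsto_right h1.fl).eventually ht
      filter_upwards [ht', ht2] with y hy1 hy2
      rw [ap_mul] at hy1
      rw [← hy2, hy1]
    · refine leftOverlap_of_ne hg (G.mul_mem hg hh) h1 hz ?_
      rintro rfl
      have := hz.fr
      rw [ap_mul, h1.fr] at this
      exact he this
  · refine leftOverlap_of_ne hg hh h1 hz ?_
    rintro rfl
    exact he hz.fr

lemma leftOverlap_of_chain {G : Subgroup PermR} (hG : AllPL G) (h : AdmitsTransitionChain G) :
    LeftOverlap G := by
  obtain ⟨g, hg, h, hh, a, b, c, d, h1, h2, hac, hcb, hbd⟩ := h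
  have hPg := hG g hg
  have hPh := hG h hh
  have hcl : IsClosed ({x | ap g x = x} ∩ {x | ap h x = x}) :=
    hPg.closed_fix.inter hPh.closed_fix
  -- no common fixed points in `(a, b]`
  have hbm : ap h b ≠ b := h2.mv hcb hbd
  obtain ⟨p, q, -, hpb, hbq, -, hpZ, -, H⟩ := gap hcl (a := 0) (b := 1) (x := b)
    ⟨hPg.fix_le le_rfl, hPh.fix_le le_rfl⟩ ⟨hPg.fix_ge le_rfl, hPh.fix_ge le_rfl⟩
    ((h1.bounds hPg).1.trans h1.lt.le) (h1.bounds hPg).2 (fun k => hbm k.2)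
  have hpa : p ≤ a := h1.le_left hpZ.1 (x := max p ((a + b) / 2))
    (max_lt hpb (by linarith [h1.lt])) (le_max_left _ _)
  -- one of the two is nontrivial near `p`
  rcases germ_alt hPg hpZ.1 with tg | ⟨e, he⟩
  · rcases germ_alt hPh hpZ.2 with th | ⟨e, he⟩
    · exfalso
      obtain ⟨y, ⟨hy1, hy2⟩, hy3⟩ := ((tg.and th).and (Ioo_mem_nhdsGT hpb)).exists
      exact H y hy3.1 (hy3.2.trans hbq) ⟨hy1, hy2⟩
    · have hec : e ≤ c := he.right_le (x := c) h2.fl (hpa.trans_lt hac) le_rfl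
      refine chain_aux hG hh hg hpZ.1 he ?_
      intro hc
      exact H e he.lt ((hec.trans_lt hcb).trans hbq) ⟨hc, he.fr⟩
  · have hec : e ≤ b := he.right_le (x := b) h1.fr hpb le_rfl
    refine chain_aux hG hg hh hpZ.2 he ?_
    intro hc
    exact H e he.lt (hec.trans_lt hbq) ⟨he.fr, hc⟩

lemma IsOrbital.mem_ap {g : PermR} (hg : IsPL g) {a b x : ℝ} (h : IsOrbital g a b) (h1 : a < x)
    (h2 : x < b) : a < ap g x ∧ ap g x < b := by
  constructor
  · have := hg.mono h1
    rwa [h.fl] at this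
  · have := hg.mono h2
    rwa [h.fr] at this

lemma IsOrbital.dir {g : PermR} (hg : IsPL g) {a b : ℝ} (h : IsOrbital g a b) :
    (∀ z, a < z → z < b → ap g z < z) ∨ (∀ z, a < z → z < b → z < ap g z) := by
  by_contra! hc
  obtain ⟨⟨z, hz1, hz2, hz⟩, ⟨w, hw1, hw2, hw⟩⟩ := hc
  obtain ⟨y, hy, hy2⟩ := (isPreconnected_Ioo (a := a) (b := b)).intermediate_value₂ ⟨hw1, hw2⟩
    ⟨hz1, hz2⟩ hg.cont.continuousOn continuousOn_id hw hz
  exact h.mv hy.1 hy.2 hy2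

/-- From a left overlap: a commutator moving `c` but trivial near `a`. -/
lemma left_comm {G : Subgroup PermR} (hG : AllPL G) {g h : PermR} (hg : g ∈ G) (hh : h ∈ G)
    {a b c : ℝ} (hac : a < c) (hcb : c < b) (h1 : IsOrbital g a b) (h2 : IsOrbital h a c) :
    ∃ k ∈ ⁅G, G⁆, ∃ x y, IsOrbital k x y ∧ a < x ∧ x < c ∧ c < y := by
  have main : ∀ g ∈ G, IsOrbital g a b → c < ap g c →
      ∃ k ∈ ⁅G, G⁆, ∃ x y, IsOrbital k x y ∧ a < x ∧ x < c ∧ c < y := by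
    intro g hg h1 hmv
    have hk := Subgroup.commutator_mem_commutator (G.inv_mem hh) (G.inv_mem hg)
    have hkG : ⁅h⁻¹, g⁻¹⁆ ∈ G := Subgroup.commutator_le_self G hk
    have hPk := hG _ hkG
    have htr := comm_trivR (hG _ (G.inv_mem hh)) (hG _ (G.inv_mem hg)) (ap_inv_fix h2.fl)
      (ap_inv_fix h1.fl)
    have hw : a < ap g⁻¹ c ∧ ap g⁻¹ c < c := by
      refine ⟨(h1.inv.mem_ap (hG _ (G.inv_mem hg)) hac hcb).1, ?_⟩
      have := (hG _ (G.inv_mem hg)).mono hmv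
      rwa [ap_inv_ap] at this
    have hmoved : ap ⁅h⁻¹, g⁻¹⁆ c ≠ c := by
      intro hc
      rw [commutatorElement_def, ap_mul, ap_mul, ap_mul, inv_inv, inv_inv, ap_inv_fix h2.fr] at hc
      apply h2.mv hw.1 hw.2
      apply ap_inj g
      rw [hc, ap_ap_inv]
    obtain ⟨x, y, hxy, hxc, hcy⟩ := exists_orbital hPk hmoved
    refine ⟨_, hk, x, y, hxy, ?_, hxc, hcy⟩
    have hfix : ap ⁅h⁻¹, g⁻¹⁆ a = a := by
      rw [commutatorElement_def, ap_mul, ap_mul, ap_mul, inv_inv, inv_inv, ap_inv_fix h2.fl,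
        ap_inv_fix h1.fl, h2.fl, h1.fl]
    rcases (hxy.le_left hfix hcy hac.le).eq_or_lt with h | h
    · exact absurd (h ▸ hxy) htr.not_orb
    · exact h
  rcases lt_or_gt_of_ne (h1.mv hac hcb) with h | h
  · refine main g⁻¹ (G.inv_mem hg) h1.inv ?_
    have := (hG _ (G.inv_mem hg)).mono h
    rwa [ap_inv_ap] at this
  · exact main g hg h1 h

lemma right_comm {G : Subgroup PermR} (hG : AllPL G) {g h : PermR} (hg : g ∈ G) (hh : h ∈ G)
    {a b c : ℝ} (hac : a < c) (hcb : c < b) (h1 : IsOrbital g a b) (h2 : IsOrbital h c b) :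
    ∃ k ∈ ⁅G, G⁆, ∃ x y, IsOrbital k x y ∧ y < b ∧ x < c ∧ c < y := by
  have main : ∀ g ∈ G, IsOrbital g a b → ap g c < c →
      ∃ k ∈ ⁅G, G⁆, ∃ x y, IsOrbital k x y ∧ y < b ∧ x < c ∧ c < y := by
    intro g hg h1 hmv
    have hk := Subgroup.commutator_mem_commutator (G.inv_mem hh) (G.inv_mem hg)
    have hkG : ⁅h⁻¹, g⁻¹⁆ ∈ G := Subgroup.commutator_le_self G hk
    have hPk := hG _ hkG
    have htr := comm_trivL (hG _ (G.inv_mem hh)) (hG _ (G.inv_mem hg)) (ap_inv_fix h2.fr)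
      (ap_inv_fix h1.fr)
    have hw : c < ap g⁻¹ c ∧ ap g⁻¹ c < b := by
      refine ⟨?_, (h1.inv.mem_ap (hG _ (G.inv_mem hg)) hac hcb).2⟩
      have := (hG _ (G.inv_mem hg)).mono hmv
      rwa [ap_inv_ap] at this
    have hmoved : ap ⁅h⁻¹, g⁻¹⁆ c ≠ c := by
      intro hc
      rw [commutatorElement_def, ap_mul, ap_mul, ap_mul, inv_inv, inv_inv, ap_inv_fix h2.fl] at hc
      apply h2.mv hw.1 hw.2
      apply ap_inj g
      rw [hc, ap_ap_inv]
    obtain ⟨x, y, hxy, hxc, hcy⟩ := exists_orbital hPk hmoved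
    refine ⟨_, hk, x, y, hxy, ?_, hxc, hcy⟩
    have hfix : ap ⁅h⁻¹, g⁻¹⁆ b = b := by
      rw [commutatorElement_def, ap_mul, ap_mul, ap_mul, inv_inv, inv_inv, ap_inv_fix h2.fr,
        ap_inv_fix h1.fr, h2.fr, h1.fr]
    rcases (hxy.right_le hfix hxc hcb.le).eq_or_lt with h | h
    · exact absurd (h ▸ hxy) htr.not_orb
    · exact h
  rcases lt_or_gt_of_ne (h1.mv hac hcb) with h | h
  · exact main g hg h1 h
  · refine main g⁻¹ (G.inv_mem hg) h1.inv ?_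
    have := (hG _ (G.inv_mem hg)).mono h
    rwa [ap_inv_ap] at this

lemma chain_of_overlap {G : Subgroup PermR} (hG : AllPL G) (h : AdmitsOneSidedOverlap G) :
    AdmitsTransitionChain G := by
  obtain ⟨g, hg, h, hh, a, b, c, hac, hcb, ⟨h1, h2⟩ | ⟨h1, h2⟩⟩ := h
  · obtain ⟨k, hk, x, y, hxy, h3, h4, h5⟩ := left_comm hG hg hh hac hcb h1 h2
    exact ⟨h, hh, k, Subgroup.commutator_le_self G hk, a, c, x, y, h2, hxy, h3, h4, h5⟩
  · obtain ⟨k, hk, x, y, hxy, h3, h4, h5⟩ := right_comm hG hg hh hac hcb h1 h2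
    exact ⟨k, Subgroup.commutator_le_self G hk, h, hh, x, y, c, b, hxy, h2, h4, h5, h3⟩

lemma LeftOverlap.overlap {G : Subgroup PermR} (h : LeftOverlap G) : AdmitsOneSidedOverlap G := by
  obtain ⟨g, hg, h, hh, a, b, c, h1, h2, h3, h4⟩ := h
  exact ⟨g, hg, h, hh, a, b, c, h1, h2, Or.inl ⟨h3, h4⟩⟩

/-- Without transition chains intersecting orbitals are equal or strictly nested. -/
lemma nested {G : Subgroup PermR} (hG : AllPL G) (hn : ¬ AdmitsTransitionChain G) {g h : PermR}
    (hg : g ∈ G) (hh : h ∈ G) {a b c d x : ℝ} (h1 : IsOrbital g a b) (h2 : IsOrbital h c d)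
    (hax : a < x) (hxb : x < b) (hcx : c < x) (hxd : x < d) :
    (a = c ∧ b = d) ∨ (a < c ∧ d < b) ∨ (c < a ∧ b < d) := by
  have hn2 : ¬ AdmitsOneSidedOverlap G := fun h => hn (chain_of_overlap hG h)
  rcases lt_trichotomy a c with h | h | h
  · rcases lt_trichotomy b d with h' | h' | h'
    · exact absurd ⟨g, hg, _, hh, a, b, c, d, h1, h2, h, hcx.trans hxb, h'⟩ hn
    · subst h'
      exact absurd ⟨g, hg, _, hh, a, b, c, h, hcx.trans hxb, Or.inr ⟨h1, h2⟩⟩ hn2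
    · exact Or.inr (Or.inl ⟨h, h'⟩)
  · subst h
    by_cases hbd : b = d
    · exact Or.inl ⟨rfl, hbd⟩
    · exact absurd (leftOverlap_of_ne hg hh h1 h2 hbd).overlap hn2
  · rcases lt_trichotomy b d with h' | h' | h'
    · exact Or.inr (Or.inr ⟨h, h'⟩)
    · subst h'
      exact absurd ⟨_, hh, g, hg, c, b, a, h, hax.trans hxd, Or.inr ⟨h2, h1⟩⟩ hn2
    · exact absurd ⟨_, hh, g, hg, c, d, a, b, h2, h1, h, hax.trans hxd, h'⟩ hn

/-- the left end of one orbital inside another one -/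
lemma nested_left {G : Subgroup PermR} (hG : AllPL G) (hn : ¬ AdmitsTransitionChain G)
    {g h : PermR} (hg : g ∈ G) (hh : h ∈ G) {a b p q : ℝ} (h1 : IsOrbital g a b)
    (h2 : IsOrbital h p q) (hap : a < p) (hpb : p < b) : q < b := by
  obtain ⟨x, hx1, hx2⟩ := exists_between (lt_min hpb h2.lt)
  rcases nested hG hn hg hh h1 h2 (hap.trans hx1) (hx2.trans_le (min_le_left _ _)) hx1
    (hx2.trans_le (min_le_right _ _)) with h | h | h
  · exact absurd h.1 hap.ne
  · exact h.2
  · exact absurd hap (not_lt.2 h.1.le)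

/-! ### Powers -/

/-- `x` can be pushed below `u` by powers. -/
lemma push_left {G : Subgroup PermR} (hG : AllPL G) {t : PermR} (ht : t ∈ G) {a b x u : ℝ}
    (h : IsOrbital t a b) (hax : a < x) (hxb : x < b) (hau : a < u) :
    ∃ s ∈ G, (∀ y, a < y → a < ap s y) ∧ ap s x < u := by
  have hP := hG t ht
  by_contra! hc
  -- all translates of `x` are at least `u`
  let O : Set ℝ := {y | ∃ s : PermR, s ∈ G ∧ (∀ y, a < y → a < ap s y) ∧ ap s a = a ∧ ap s b = b ∧
    ap s x = y}
  have hO : ∀ y ∈ O, u ≤ y ∧ y < b := by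
    rintro y ⟨s, hs, h1, h2, h3, rfl⟩
    refine ⟨hc s hs h1, ?_⟩
    have := (hG s hs).mono hxb
    rwa [h3] at this
  have hxO : x ∈ O := ⟨1, G.one_mem, fun y hy => hy, rfl, rfl, rfl⟩
  have hbd : BddBelow O := ⟨u, fun y hy => (hO y hy).1⟩
  have h1 : u ≤ sInf O := le_csInf ⟨x, hxO⟩ fun y hy => (hO y hy).1
  have h2 : sInf O < b := (csInf_le hbd hxO).trans_lt hxb
  have inv : ∀ r ∈ G, IsOrbital r a b → ∀ y ∈ O, ap r y ∈ O := by
    rintro r hr hro y ⟨s, hs, k1, k2, k3, rfl⟩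
    refine ⟨s * r, G.mul_mem hs hr, fun y hy => ?_, ?_, ?_, rfl⟩
    · have := (hG r hr).mono (k1 y hy)
      rwa [hro.fl] at this
    · rw [ap_mul, k2, hro.fl]
    · rw [ap_mul, k3, hro.fr]
  have fin : ∀ r ∈ G, IsOrbital r a b → ¬ ap r (sInf O) < sInf O := by
    intro r hr hro hlt
    have hc := (hG r hr).cont.continuousAt (x := sInf O)
    have hev : ∀ᶠ y in 𝓝 (sInf O), ap r y < sInf O := hc.eventually (gt_mem_nhds hlt)
    obtain ⟨l, v, ⟨hl, hv⟩, H⟩ := mem_nhds_iff_exists_Ioo_subset.1 hev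
    obtain ⟨y, hy, hyv⟩ := exists_lt_of_csInf_lt ⟨x, hxO⟩ hv
    have h3 : ap r y < sInf O := H ⟨hl.trans_le (csInf_le hbd hy), hyv⟩
    exact absurd (csInf_le hbd (inv r hr hro y hy)) (not_le.2 h3)
  rcases lt_or_gt_of_ne (h.mv (hau.trans_le h1) h2) with h3 | h3
  · exact fin t ht h h3
  · refine fin t⁻¹ (G.inv_mem ht) h.inv ?_
    have := (hG _ (G.inv_mem ht)).mono h3
    rwa [ap_inv_ap] at this

/-! ### Derived subgroups -/

/-- iterated derived subgroups -/
def dn (n : ℕ) (H : Subgroup PermR) : Subgroup PermR := (fun K => ⁅K, K⁆)^[n] H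

lemma dn_zero (H : Subgroup PermR) : dn 0 H = H := rfl
lemma dn_succ (n : ℕ) (H : Subgroup PermR) : dn (n + 1) H = dn n ⁅H, H⁆ :=
  Function.iterate_succ_apply _ _ _
lemma dn_succ' (n : ℕ) (H : Subgroup PermR) : dn (n + 1) H = ⁅dn n H, dn n H⁆ :=
  Function.iterate_succ_apply' _ _ _
lemma dn_mono (n : ℕ) {H K : Subgroup PermR} (h : H ≤ K) : dn n H ≤ dn n K := by
  induction n with
  | zero => exact h
  | succ n ih => rw [dn_succ', dn_succ']; exact Subgroup.commutator_mono ih ih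
lemma dn_le (n : ℕ) (H : Subgroup PermR) : dn n H ≤ H := by
  induction n with
  | zero => exact le_rfl
  | succ n ih => rw [dn_succ']; exact (Subgroup.commutator_le_self _).trans ih

lemma map_derivedSeries_dn (G : Subgroup PermR) (n : ℕ) :
    (derivedSeries ↥G n).map G.subtype = dn n G := by
  induction n with
  | zero => rw [derivedSeries_zero, dn_zero, ← MonoidHom.range_eq_map, Subgroup.range_subtype]
  | succ n ih => rw [derivedSeries_succ, Subgroup.map_commutator, ih, dn_succ']

lemma solvable_iff (G : Subgroup PermR) : IsSolvable ↥G ↔ ∃ n, dn n G = ⊥ := by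
  constructor
  · rintro ⟨n, hn⟩
    refine ⟨n, ?_⟩
    rw [← map_derivedSeries_dn, hn, Subgroup.map_bot]
  · rintro ⟨n, hn⟩
    refine ⟨n, ?_⟩
    rw [← map_derivedSeries_dn] at hn
    exact (Subgroup.map_eq_bot_iff_of_injective _ G.subtype_injective).1 hn

/-! ### Transition chains imply insolubility -/

lemma noChain_mono {G H : Subgroup PermR} (h : H ≤ G) (hn : ¬ AdmitsTransitionChain G) :
    ¬ AdmitsTransitionChain H := by
  rintro ⟨g, hg, k, hk, H⟩
  exact hn ⟨g, h hg, k, h hk, H⟩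

lemma AllPL.anti {G H : Subgroup PermR} (hG : AllPL G) (h : H ≤ G) : AllPL H :=
  fun g hg => hG g (h hg)

lemma tower_derived {K : Subgroup PermR} (hK : AllPL K) (hn : ¬ AdmitsTransitionChain K)
    (a b : ℕ → ℝ) (ha : ∀ i, a (i + 1) < a i) (hb : ∀ i, b i < b (i + 1))
    (H : ∀ i, ∃ g ∈ K, IsOrbital g (a i) (b i)) (i : ℕ) :
    ∃ g ∈ ⁅K, K⁆, IsOrbital g (a i) (b i) := by
  obtain ⟨g, hg, ho⟩ := H i
  obtain ⟨t, ht, hto⟩ := H (i + 1)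
  have hPg := hK g hg
  have hai := ha i
  have hbi := hb i
  have hab := ho.lt
  have hfix : ap g (a (i + 1)) = a (i + 1) := by
    by_contra hc
    obtain ⟨u, v, huv, h1, h2⟩ := exists_orbital hPg hc
    have := nested_left hK hn hg ht huv hto h1 h2
    exact huv.mv (h1.trans hai) ((hab.trans hbi).trans this) ho.fl
  have htr : TrivR g (a (i + 1)) := by
    rcases germ_alt hPg hfix with h | ⟨e, he⟩
    · exact h
    · exfalso
      have hle : e ≤ a i := he.right_le ho.fl hai le_rfl
      obtain ⟨x, h1, h2⟩ := exists_between he.lt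
      rcases nested hK hn hg ht he hto h1 h2 h1 (by linarith) with h | h | h
      · linarith
      · linarith
      · linarith
  obtain ⟨u, hu, Hu⟩ := (mem_nhdsGT_iff_exists_Ioo_subset).1 htr
  obtain ⟨s, hs, hs1, hs2⟩ := push_left hK ht hto (x := b i) (u := u) (by linarith) hbi hu
  have key : ∀ x, a i ≤ x → x ≤ b i → ap ⁅g⁻¹, s⁆ x = ap g⁻¹ x := by
    intro x h1 h2
    rw [commutatorElement_def, ap_mul, ap_mul, ap_mul, inv_inv]
    have hPi := hK _ (K.inv_mem hg)
    have h3 : a i ≤ ap g⁻¹ x := by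
      have := hPi.mono.monotone h1
      rwa [ap_inv_fix ho.fl] at this
    have h4 : ap g⁻¹ x ≤ b i := by
      have := hPi.mono.monotone h2
      rwa [ap_inv_fix ho.fr] at this
    have h5 : ap g (ap s (ap g⁻¹ x)) = ap s (ap g⁻¹ x) :=
      Hu ⟨hs1 _ (hai.trans_le h3), ((hK s hs).mono.monotone h4).trans_lt hs2⟩
    rw [h5, ap_inv_ap]
  refine ⟨_, Subgroup.commutator_mem_commutator (K.inv_mem hg) hs, mkOrb hab ?_ ?_ ?_⟩
  · intro x h1 h2
    rw [key x h1.le h2.le]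
    exact ho.inv.mv h1 h2
  · rw [key _ le_rfl hab.le, ho.inv.fl]
  · rw [key _ hab.le le_rfl, ho.inv.fr]

lemma tower_dn {K : Subgroup PermR} (hK : AllPL K) (hn : ¬ AdmitsTransitionChain K)
    (a b : ℕ → ℝ) (ha : ∀ i, a (i + 1) < a i) (hb : ∀ i, b i < b (i + 1))
    (H : ∀ i, ∃ g ∈ K, IsOrbital g (a i) (b i)) (n : ℕ) :
    ∀ i, ∃ g ∈ dn n K, IsOrbital g (a i) (b i) := by
  induction n with
  | zero => exact H
  | succ n ih =>
    rw [dn_succ']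
    exact tower_derived (hK.anti (dn_le n K)) (noChain_mono (dn_le n K) hn) a b ha hb ih

lemma orb_ne_one {a b : ℝ} (h : IsOrbital 1 a b) : False := by
  obtain ⟨x, h1, h2⟩ := exists_between h.lt
  exact h.mv h1 h2 rfl

lemma noChain_of_dn (n : ℕ) : ∀ G : Subgroup PermR, AllPL G → dn n G = ⊥ →
    ¬ AdmitsTransitionChain G := by
  induction n with
  | zero =>
    rintro G - h ⟨g, hg, -, -, a, b, c, d, ho, -⟩
    rw [dn_zero] at h
    rw [h, Subgroup.mem_bot] at hg
    exact orb_ne_one (hg ▸ ho)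
  | succ n ih =>
    intro G hG hd hch
    rw [dn_succ] at hd
    have hGle : ⁅G, G⁆ ≤ G := Subgroup.commutator_le_self G
    have hn := ih ⁅G, G⁆ (hG.anti hGle) hd
    obtain ⟨g, hg, h, hh, a, b, c, hac, hcb, h1, h2⟩ := leftOverlap_of_chain hG hch
    obtain ⟨k, hk, x, y, hxy, hax, hxc, hcy⟩ := left_comm hG hg hh hac hcb h1 h2
    have main : ∀ s ∈ G, IsOrbital s a c → (∀ z, a < z → z < c → ap s z < z) → False := by
      intro s hs hso hsl
      have hPs := hG s hs
      let α : ℕ → ℝ := fun n => ap (s ^ n) x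
      let β : ℕ → ℝ := fun n => ap (s ^ n) y
      have hα : ∀ n, α (n + 1) = ap s (α n) := fun n => by
        simp only [α, pow_succ, ap_mul]
      have hβ : ∀ n, β (n + 1) = ap s (β n) := fun n => by
        simp only [β, pow_succ, ap_mul]
      have hαm : ∀ n, a < α n ∧ α n < c := by
        intro n
        induction n with
        | zero => exact ⟨hax, hxc⟩
        | succ n ih' => rw [hα]; exact hso.mem_ap hPs ih'.1 ih'.2
      have hβm : ∀ n, c < β n := by
        intro n
        induction n with
        | zero => exact hcy
        | succ n ih' =>
          rw [hβ]
          have := hPs.mono ih'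
          rwa [hso.fr] at this
      have ho : ∀ n, ∃ g ∈ ⁅G, G⁆, IsOrbital g (α n) (β n) := by
        intro n
        have hsn := G.pow_mem hs n
        refine ⟨(s ^ n)⁻¹ * k * s ^ n, ?_, hxy.conj (hG _ hsn).mono⟩
        have : (s ^ n)⁻¹ * k * s ^ n = k * ⁅k⁻¹, (s ^ n)⁻¹⁆ := by
          rw [commutatorElement_def]; group
        rw [this]
        exact mul_mem hk (Subgroup.commutator_mem_commutator (G.inv_mem (hGle hk))
          (G.inv_mem hsn))
      have hαl : ∀ n, α (n + 1) < α n := fun n => by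
        rw [hα]; exact hsl _ (hαm n).1 (hαm n).2
      have hβl : ∀ n, β n < β (n + 1) := fun n => by
        obtain ⟨g1, hg1, ho1⟩ := ho n
        obtain ⟨g2, hg2, ho2⟩ := ho (n + 1)
        rcases nested (hG.anti hGle) hn hg1 hg2 ho1 ho2 (hαm n).2 (hβm n) (hαm (n + 1)).2
          (hβm (n + 1)) with h | h | h
        · exact absurd h.1 (hαl n).ne'
        · exact absurd h.1 (hαl n).not_gt
        · exact h.2
      obtain ⟨g1, hg1, ho1⟩ := tower_dn (hG.anti hGle) hn α β hαl hβl ho n 0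
      rw [hd, Subgroup.mem_bot] at hg1
      exact orb_ne_one (hg1 ▸ ho1)
    rcases h2.dir (hG h hh) with hl | hr
    · exact main h hh h2 hl
    · refine main h⁻¹ (G.inv_mem hh) h2.inv fun z hz1 hz2 => ?_
      have hPi := hG _ (G.inv_mem hh)
      have := hPi.mono (hr z hz1 hz2)
      rwa [ap_inv_ap] at this

/-! ### Groups without transition chains -/

/-- Finding a breakpoint outside `U`. -/
lemma find_break {h : PermR} (hP : IsPL h) {U : Set ℝ}
    (hU : ∀ e p, IsOrbital h e p → e ∈ U → p ∈ U) {a : ℝ} (h0 : 0 ≤ a) (ha : ap h a = a)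
    (ht : TrivR h a) {p0 q0 : ℝ} (ho : IsOrbital h p0 q0) (hap : a < p0) (hp : p0 ∉ U) :
    ∃ p ∈ Breakpoints h, a < p ∧ p ≤ p0 ∧ p ∉ U := by
  have hfin : {p | (∃ q, IsOrbital h p q) ∧ a < p ∧ p ≤ p0 ∧ p ∉ U}.Finite :=
    (finite_left_ends hP).subset fun p hp => hp.1
  obtain ⟨p, ⟨⟨q, hpq⟩, hap', hpp, hpU⟩, hmin⟩ :=
    hfin.exists_minimal ⟨p0, ⟨q0, ho⟩, hap, le_rfl, hp⟩
  refine ⟨p, ?_, hap', hpp, hpU⟩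
  by_contra hb
  obtain ⟨e, he⟩ := left_orbital hP hpq (h0.trans_lt hap') hb
  obtain ⟨x, hx1, hx2⟩ := exists_between (max_lt he.lt hap')
  have hae : a ≤ e := he.le_left ha hx2 ((le_max_right _ _).trans hx1.le)
  have hae' : a < e := by
    rcases hae.eq_or_lt with h | h
    · exact absurd (h ▸ he) ht.not_orb
    · exact h
  have heU : e ∉ U := fun k => hpU (hU e p he k)
  exact absurd (hmin ⟨⟨p, he⟩, hae', he.lt.le.trans hpp, heU⟩ he.lt.le) (not_le.2 he.lt)

lemma mem_gsupp {K : Subgroup PermR} {x : ℝ} : x ∈ GSupp K ↔ ∃ k ∈ K, ap k x ≠ x := by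
  simp [GSupp, Supp]

lemma notMem_gsupp {K : Subgroup PermR} {x : ℝ} : x ∉ GSupp K ↔ ∀ k ∈ K, ap k x = x := by
  simp [GSupp, Supp]

lemma closed_gfix {K : Subgroup PermR} (hK : AllPL K) : IsClosed {x | ∀ k ∈ K, ap k x = x} := by
  have : {x | ∀ k ∈ K, ap k x = x} = ⋂ k ∈ K, {x | ap k x = x} := by
    ext x; simp
  rw [this]
  exact isClosed_biInter fun k hk => (hK k hk).closed_fix

lemma group_orbital {K : Subgroup PermR} (hK : AllPL K) {a b x : ℝ} (ha : ∀ k ∈ K, ap k a = a)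
    (hb : ∀ k ∈ K, ap k b = b) (hax : a < x) (hxb : x < b) (hx : x ∈ GSupp K) :
    ∃ c d, a ≤ c ∧ c < x ∧ x < d ∧ d ≤ b ∧ (∀ k ∈ K, ap k c = c) ∧ (∀ k ∈ K, ap k d = d) ∧
      Ioo c d ⊆ GSupp K := by
  obtain ⟨c, d, h1, h2, h3, h4, h5, h6, h7⟩ := gap (closed_gfix hK) (a := a) (b := b) (x := x)
    ha hb hax.le hxb.le (fun h => notMem_gsupp.2 h hx)
  refine ⟨c, d, h1, h2, h3, h4, h5, h6, fun y hy => ?_⟩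
  by_contra hc
  exact h7 y hy.1 hy.2 (notMem_gsupp.1 hc)

lemma common_orbital {G K : Subgroup PermR} (hG : AllPL G) (hn : ¬ AdmitsTransitionChain G)
    (hKG : K ≤ G) {a b : ℝ} (hs : Ioo a b ⊆ GSupp K) {x y : ℝ} (hx : x ∈ Ioo a b)
    (hy : y ∈ Ioo a b) :
    ∃ k ∈ K, ∃ c d, IsOrbital k c d ∧ x ∈ Ioo c d ∧ y ∈ Ioo c d := by
  refine (isPreconnected_Ioo (a := a) (b := b)).induction₂
    (fun x y => ∃ k ∈ K, ∃ c d, IsOrbital k c d ∧ x ∈ Ioo c d ∧ y ∈ Ioo c d) ?_ ?_ ?_ hx hy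
  · intro x hx
    obtain ⟨k, hk, hkx⟩ := mem_gsupp.1 (hs hx)
    obtain ⟨c, d, ho, h1, h2⟩ := exists_orbital (hG k (hKG hk)) hkx
    filter_upwards [nhdsWithin_le_nhds (Ioo_mem_nhds h1 h2)] with y hy
    exact ⟨k, hk, c, d, ho, ⟨h1, h2⟩, hy⟩
  · rintro x y z - - - ⟨k, hk, c, d, ho, h1, h2⟩ ⟨k', hk', c', d', ho', h1', h2'⟩
    rcases nested hG hn (hKG hk) (hKG hk') ho ho' h2.1 h2.2 h1'.1 h1'.2 with h | h | h
    · obtain ⟨rfl, rfl⟩ := h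
      exact ⟨k, hk, c, d, ho, h1, h2'⟩
    · exact ⟨k, hk, c, d, ho, h1, h.1.trans h2'.1, h2'.2.trans h.2⟩
    · exact ⟨k', hk', c', d', ho', ⟨h.1.trans h1.1, h1.2.trans h.2⟩, h2'⟩
  · rintro x y - - ⟨k, hk, c, d, ho, h1, h2⟩
    exact ⟨k, hk, c, d, ho, h2, h1⟩

/-- breakpoints of `H` in `(a,b)` lie in the `H`-orbits of points of `F`. -/
def BreakRep (H : Subgroup PermR) (a b : ℝ) (F : Finset ℝ) : Prop :=
  ∀ h ∈ H, ∀ p ∈ Breakpoints h, a < p → p < b → ∃ y ∈ F, ∃ g ∈ H, ap g y = p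

lemma fixed_between {f : PermR} (hf : IsPL f) {a b y : ℝ} (ha : ap f a = a) (hb : ap f b = b)
    (h : a < ap f y ∧ ap f y < b) : a < y ∧ y < b := by
  constructor
  · by_contra hc
    have := hf.mono.monotone (not_lt.1 hc)
    linarith
  · by_contra hc
    have := hf.mono.monotone (not_lt.1 hc)
    linarith

lemma not_all_triv {G H K : Subgroup PermR} (hG : AllPL G) (hn : ¬ AdmitsTransitionChain G)
    (hHG : H ≤ G) (hKH : K ≤ H) {a b : ℝ} (hab : a < b) (h0 : 0 ≤ a)
    (ha : ∀ h ∈ H, ap h a = a) (hb : ∀ h ∈ H, ap h b = b) {F : Finset ℝ}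
    (hF : BreakRep H a b F) (ht : ∀ k ∈ K, TrivR k a) (hs : Ioo a b ⊆ GSupp K) : False := by
  have hKG : K ≤ G := hKH.trans hHG
  have inner : ∀ k ∈ K, ∀ c d x, IsOrbital k c d → x ∈ Ioo c d → x ∈ Ioo a b → a < c ∧ d ≤ b := by
    intro k hk c d x ho hx hxab
    constructor
    · rcases (ho.le_left (ha k (hKH hk)) hx.2 hxab.1.le).eq_or_lt with h | h
      · exact absurd (h ▸ ho) (ht k hk).not_orb
      · exact h
    · exact ho.right_le (hb k (hKH hk)) hx.1 hxab.2.le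
  -- an orbital containing all representatives in `(a,b)`
  obtain ⟨k, hk, c, d, ho, hxc, hFc⟩ : ∃ k ∈ K, ∃ c d, IsOrbital k c d ∧
      (∃ x, x ∈ Ioo c d ∧ x ∈ Ioo a b) ∧ ∀ y ∈ F, y ∈ Ioo a b → y ∈ Ioo c d := by
    obtain ⟨m, hm⟩ := exists_between hab
    let F' := insert m (F.filter (fun y => y ∈ Ioo a b))
    have hne : F'.Nonempty := ⟨m, Finset.mem_insert_self _ _⟩
    have hF' : ∀ y ∈ F', y ∈ Ioo a b := by
      intro y hy
      rcases Finset.mem_insert.1 hy with rfl | h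
      · exact hm
      · exact (Finset.mem_filter.1 h).2
    have h1 := hF' _ (F'.min'_mem hne)
    obtain ⟨k, hk, c, d, ho, h3, h4⟩ := common_orbital hG hn hKG hs h1 (hF' _ (F'.max'_mem hne))
    refine ⟨k, hk, c, d, ho, ⟨_, h3, h1⟩, fun y hy hyab => ?_⟩
    have hyF : y ∈ F' := Finset.mem_insert_of_mem (Finset.mem_filter.2 ⟨hy, hyab⟩)
    exact ⟨h3.1.trans_le (F'.min'_le y hyF), (F'.le_max' y hyF).trans_lt h4.2⟩
  obtain ⟨x, hx, hxab⟩ := hxc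
  obtain ⟨hac, hdb⟩ := inner k hk c d x ho hx hxab
  -- a bigger orbital
  obtain ⟨k', hk', c', d', ho', hx', hc'⟩ := common_orbital hG hn hKG hs hxab
    (show c ∈ Ioo a b from ⟨hac, hx.1.trans hxab.2⟩)
  obtain ⟨hac', hdb'⟩ := inner k' hk' c' d' x ho' hx' hxab
  have hdd' : d < d' := nested_left hG hn (hKG hk') (hKG hk) ho' ho hc'.1 hc'.2
  let U : Set ℝ := {y | ∃ g ∈ H, ap g y ∈ Ioo c d}
  have hcU : c' ∉ U := by
    rintro ⟨f, hf, hfc⟩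
    have hPf := hG f (hHG hf)
    have hkf : f⁻¹ * k' * f ∈ G :=
      mul_mem (mul_mem (G.inv_mem (hHG hf)) (hKG hk')) (hHG hf)
    have h1 : ap f d' < d := nested_left hG hn (hKG hk) hkf ho (ho'.conj hPf.mono) hfc.1 hfc.2
    have h2 : c' < ap f c' := hc'.1.trans hfc.1
    obtain ⟨u, v, huv, h3, h4⟩ := exists_orbital hPf h2.ne'
    obtain ⟨z, hz, hzf⟩ := (isPreconnected_Icc (a := c') (b := d')).intermediate_value₂
      (left_mem_Icc.2 ho'.lt.le) (right_mem_Icc.2 ho'.lt.le) continuousOn_id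
      hPf.cont.continuousOn (show id c' ≤ ap f c' from h2.le)
      (show ap f d' ≤ id d' from (h1.trans hdd').le)
    have hzf' : ap f z = z := hzf.symm
    have hzd : z < d' := by
      refine lt_of_le_of_ne hz.2 ?_
      rintro rfl
      linarith
    have hvz : v ≤ z := huv.right_le hzf' h3 hz.1
    exact hn ⟨f, hHG hf, k', hKG hk', u, v, c', d', huv, ho', h3, h4, hvz.trans_lt hzd⟩
  have hU : ∀ e p, IsOrbital k' e p → e ∈ U → p ∈ U := by
    rintro e p hep ⟨g, hg, hge⟩
    refine ⟨g, hg, ?_⟩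
    have hkf : g⁻¹ * k' * g ∈ G :=
      mul_mem (mul_mem (G.inv_mem (hHG hg)) (hKG hk')) (hHG hg)
    have hm := (hG g (hHG hg)).mono
    exact ⟨hge.1.trans (hm hep.lt),
      nested_left hG hn (hKG hk) hkf ho (hep.conj hm) hge.1 hge.2⟩
  obtain ⟨p, hpB, hap, hpc, hpU⟩ := find_break (hG k' (hKG hk')) hU h0 (ha k' (hKH hk'))
    (ht k' hk') ho' hac' hcU
  have hpb : p < b := hpc.trans_lt (hc'.1.trans (hx.1.trans hxab.2))
  obtain ⟨y, hy, g, hg, hgy⟩ := hF k' (hKH hk') p hpB hap hpb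
  have hPg := hG g (hHG hg)
  have hyab : y ∈ Ioo a b := fixed_between hPg (ha g hg) (hb g hg) (by rw [hgy]; exact ⟨hap, hpb⟩)
  apply hpU
  refine ⟨g⁻¹, H.inv_mem hg, ?_⟩
  rw [← hgy, ap_inv_ap]
  exact hFc y hy hyab

lemma exists_nontriv {G H : Subgroup PermR} (hG : AllPL G) (hn : ¬ AdmitsTransitionChain G)
    (hHG : H ≤ G) {a b : ℝ} (hab : a < b) (h0 : 0 ≤ a)
    (ha : ∀ h ∈ H, ap h a = a) (hb : ∀ h ∈ H, ap h b = b) {F : Finset ℝ}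
    (hF : BreakRep H a b F) (hs : Ioo a b ⊆ GSupp H) : ∃ h ∈ H, ¬ TrivR h a := by
  by_contra! hc
  exact not_all_triv hG hn hHG le_rfl hab h0 ha hb hF hc hs

/-- the subgroup of elements trivial near `a` -/
def kerR (H : Subgroup PermR) (hH : AllPL H) (a : ℝ) (ha : ∀ h ∈ H, ap h a = a) :
    Subgroup PermR where
  carrier := {h | h ∈ H ∧ TrivR h a}
  one_mem' := ⟨H.one_mem, Eventually.of_forall fun y => rfl⟩
  mul_mem' := by
    rintro g h ⟨hg, tg⟩ ⟨hh, th⟩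
    refine ⟨H.mul_mem hg hh, ?_⟩
    filter_upwards [tg, th] with y h1 h2
    rw [ap_mul, h1, h2]
  inv_mem' := by
    rintro g ⟨hg, tg⟩
    refine ⟨H.inv_mem hg, ?_⟩
    filter_upwards [tg] with y h1
    exact ap_inv_fix h1

lemma kerR_conj {H : Subgroup PermR} (hH : AllPL H) {a : ℝ} (ha : ∀ h ∈ H, ap h a = a)
    {k h : PermR} (hk : k ∈ kerR H hH a ha) (hh : h ∈ H) : h * k * h⁻¹ ∈ kerR H hH a ha := by
  refine ⟨mul_mem (mul_mem hh hk.1) (H.inv_mem hh), ?_⟩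
  filter_upwards [((hH h hh).tendsto_right (ha h hh)).eventually hk.2] with y hy
  rw [ap_mul, ap_mul, hy, ap_inv_ap]

lemma commutator_le_kerR {H : Subgroup PermR} (hH : AllPL H) {a : ℝ} (ha : ∀ h ∈ H, ap h a = a) :
    ⁅H, H⁆ ≤ kerR H hH a ha := by
  rw [Subgroup.commutator_le]
  intro g hg h hh
  exact ⟨Subgroup.commutator_le_self H (Subgroup.commutator_mem_commutator hg hh),
    comm_trivR (hH g hg) (hH h hh) (ha g hg) (ha h hh)⟩

lemma kerR_supp {H : Subgroup PermR} (hH : AllPL H) {a : ℝ} (ha : ∀ h ∈ H, ap h a = a)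
    {h : PermR} (hh : h ∈ H) {x : ℝ} (hx : x ∈ GSupp (kerR H hH a ha)) :
    ap h x ∈ GSupp (kerR H hH a ha) := by
  obtain ⟨k, hk, hkx⟩ := mem_gsupp.1 hx
  refine mem_gsupp.2 ⟨h⁻¹ * k * h, ?_, ?_⟩
  · have := kerR_conj hH ha hk (H.inv_mem hh)
    rwa [inv_inv] at this
  · rw [ap_mul, ap_mul, ap_inv_ap]
    exact fun hc => hkx (ap_inj h hc)


lemma full_orbital {G H : Subgroup PermR} (hG : AllPL G) (hn : ¬ AdmitsTransitionChain G)
    (hHG : H ≤ G) {a b : ℝ} (hab : a < b)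
    (ha : ∀ h ∈ H, ap h a = a) (hb : ∀ h ∈ H, ap h b = b)
    (hs : Ioo a b ⊆ GSupp H) {h : PermR} (hh : h ∈ H) (ht : ¬ TrivR h a) : IsOrbital h a b := by
  rcases germ_alt (hG h (hHG hh)) (ha h hh) with h1 | ⟨e, he⟩
  · exact absurd h1 ht
  have heb : e ≤ b := by
    by_contra hc
    exact he.mv hab (not_le.1 hc) (hb h hh)
  rcases heb.eq_or_lt with rfl | heb
  · exact he
  exfalso
  obtain ⟨k, hk, hke⟩ := mem_gsupp.1 (hs ⟨he.lt, heb⟩)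
  obtain ⟨u, v, huv, hue, hev⟩ := exists_orbital (hG k (hHG hk)) hke
  have hau : a ≤ u := huv.le_left (ha k hk) hev he.lt.le
  rcases hau.eq_or_lt with rfl | hau
  · obtain ⟨x, hx1, hx2⟩ := exists_between he.lt
    rcases nested hG hn (hHG hh) (hHG hk) he huv hx1 hx2 hx1 (hx2.trans hev) with h | h | h
    · exact absurd h.2 hev.ne
    · linarith [h.1]
    · linarith [h.1]
  · obtain ⟨x, hx1, hx2⟩ := exists_between hue
    rcases nested hG hn (hHG hh) (hHG hk) he huv (hau.trans hx1) hx2 hx1 (hx2.trans hev)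
      with h | h | h
    · linarith [h.1]
    · linarith [h.2]
    · linarith [h.1]

lemma core_orbital {G H : Subgroup PermR} (hG : AllPL G) (hn : ¬ AdmitsTransitionChain G)
    (hHG : H ≤ G) (hH : AllPL H) {a b : ℝ} (hab : a < b) (h0 : 0 ≤ a)
    (ha : ∀ h ∈ H, ap h a = a) (hb : ∀ h ∈ H, ap h b = b)
    (hs : Ioo a b ⊆ GSupp H) {F : Finset ℝ} (hF : BreakRep H a b F) {c d : ℝ} (hac : a ≤ c)
    (hcd : c < d) (hdb : d ≤ b) (hc : ∀ k ∈ kerR H hH a ha, ap k c = c)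
    (hd : ∀ k ∈ kerR H hH a ha, ap k d = d) (hK : Ioo c d ⊆ GSupp (kerR H hH a ha)) :
    ∃ F1 : Finset ℝ, F1.card < F.card ∧ BreakRep (kerR H hH a ha) c d F1 := by
  have hKH : kerR H hH a ha ≤ H := fun k hk => hk.1
  have hfull : ∀ h ∈ H, h ∉ kerR H hH a ha → IsOrbital h a b := fun h hh hk =>
    full_orbital hG hn hHG hab ha hb hs hh fun ht => hk ⟨hh, ht⟩
  have hac' : a < c := by
    rcases hac.eq_or_lt with rfl | hac
    · exfalso
      rcases hdb.eq_or_lt with rfl | hdb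
      · exact not_all_triv hG hn hHG hKH hab h0 ha hb hF (fun k hk => hk.2) hK
      · obtain ⟨h, hh, ht⟩ := exists_nontriv hG hn hHG hab h0 ha hb hF hs
        have ho := full_orbital hG hn hHG hab ha hb hs hh ht
        have hdK := notMem_gsupp.2 hd
        have key : ∀ h ∈ H, IsOrbital h a b → ¬ ap h d < d := by
          intro h hh ho hlt
          have := kerR_supp hH ha (H.inv_mem hh) (hK ⟨(ho.mem_ap (hH h hh) hcd hdb).1, hlt⟩)
          rw [ap_inv_ap] at this
          exact hdK this
        rcases lt_or_gt_of_ne (ho.mv hcd hdb) with h1 | h1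
        · exact key h hh ho h1
        · refine key h⁻¹ (H.inv_mem hh) ho.inv ?_
          have := (hH _ (H.inv_mem hh)).mono h1
          rwa [ap_inv_ap] at this
    · exact hac
  have hcK := notMem_gsupp.2 hc
  have hcb : c < b := hcd.trans_le hdb
  -- elements of `H` taking a point of `(c,d)` into `(c,d)` are in `K`
  have stab : ∀ h ∈ H, ∀ x, x ∈ Ioo c d → ap h x ∈ Ioo c d → h ∈ kerR H hH a ha := by
    have key : ∀ h ∈ H, ∀ x, x ∈ Ioo c d → ap h x ∈ Ioo c d → ¬ c < ap h c := by
      intro h hh x hx hx' hlt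
      have h1 : ap h c < d := ((hH h hh).mono hx.1).trans hx'.2
      have := kerR_supp hH ha (H.inv_mem hh) (hK ⟨hlt, h1⟩)
      rw [ap_inv_ap] at this
      exact hcK this
    intro h hh x hx hx'
    by_contra hk
    have ho := hfull h hh hk
    rcases lt_or_gt_of_ne (ho.mv hac' hcb) with h1 | h1
    · refine key h⁻¹ (H.inv_mem hh) (ap h x) hx' (by rwa [ap_inv_ap]) ?_
      have := (hH _ (H.inv_mem hh)).mono h1
      rwa [ap_inv_ap] at this
    · exact key h hh x hx hx' h1
  classical
  let P : ℝ → Prop := fun y => ∃ h ∈ H, ap h y ∈ Ioo c d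
  have hch : ∀ y, ∃ h, P y → h ∈ H ∧ ap h y ∈ Ioo c d := by
    intro y
    by_cases hy : P y
    · obtain ⟨h, h1, h2⟩ := hy
      exact ⟨h, fun _ => ⟨h1, h2⟩⟩
    · exact ⟨1, fun h => absurd h hy⟩
  choose γ hγ using hch
  let F1 : Finset ℝ := (F.filter P).image fun y => ap (γ y) y
  have hF1 : BreakRep (kerR H hH a ha) c d F1 := by
    intro k hk p hp h1 h2
    obtain ⟨y, hy, g, hg, rfl⟩ := hF k hk.1 p hp (hac'.trans h1) (h2.trans_le hdb)
    have hPy : P y := ⟨g, hg, h1, h2⟩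
    obtain ⟨hγ1, hγ2⟩ := hγ y hPy
    have e : ap ((γ y)⁻¹ * g) (ap (γ y) y) = ap g y := by rw [ap_mul, ap_inv_ap]
    refine ⟨ap (γ y) y, Finset.mem_image.2 ⟨y, Finset.mem_filter.2 ⟨hy, hPy⟩, rfl⟩,
      (γ y)⁻¹ * g, ?_, e⟩
    refine stab _ (H.mul_mem (H.inv_mem hγ1) hg) _ hγ2 ?_
    rw [e]; exact ⟨h1, h2⟩
  refine ⟨F1, ?_, hF1⟩
  refine Finset.card_image_le.trans_lt ?_
  obtain ⟨k, hk, hkt⟩ := exists_nontriv hG hn (hKH.trans hHG) hcd (h0.trans hac) hc hd hF1 hK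
  rcases germ_alt (hH k hk.1) (hc k hk) with h1 | ⟨e, he⟩
  · exact absurd h1 hkt
  have hU : ∀ e p, IsOrbital k e p → e ∈ GSupp (kerR H hH a ha) → p ∈ GSupp (kerR H hH a ha) := by
    intro e p hep heK
    obtain ⟨k2, hk2, hm⟩ := mem_gsupp.1 heK
    obtain ⟨u, v, huv, hue, hev⟩ := exists_orbital (hH k2 hk2.1) hm
    have := nested_left hG hn (hHG hk2.1) (hHG hk.1) huv hep hue hev
    exact mem_gsupp.2 ⟨k2, hk2, huv.mv (hue.trans hep.lt) this⟩
  obtain ⟨p, hp, hap, hpc, hpK⟩ := find_break (hH k hk.1) hU h0 (ha k hk.1) hk.2 he hac' hcK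
  obtain ⟨y, hy, g, hg, rfl⟩ := hF k hk.1 p hp hap (hpc.trans_lt hcb)
  refine Finset.card_lt_card (Finset.filter_ssubset.2 ⟨y, hy, ?_⟩)
  rintro ⟨h, hh, hm⟩
  apply hpK
  have := kerR_supp hH ha (H.mul_mem (H.inv_mem hh) hg) (hK hm)
  rwa [ap_mul, ap_inv_ap] at this

def NestFam (H : Subgroup PermR) (a b : ℝ) (S : Finset (ℝ × ℝ)) : Prop :=
  (∀ s ∈ S, a ≤ s.1 ∧ s.2 ≤ b ∧ ∃ h ∈ H, IsOrbital h s.1 s.2) ∧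
    ∀ s ∈ S, ∀ t ∈ S, Ioo s.1 s.2 ⊆ Ioo t.1 t.2 ∨ Ioo t.1 t.2 ⊆ Ioo s.1 s.2

/-- A nested family of orbitals of `H` lies in a single group orbital. -/
lemma NestFam.locate {H : Subgroup PermR} (hH : AllPL H) {a b : ℝ}
    (ha : ∀ h ∈ H, ap h a = a) (hb : ∀ h ∈ H, ap h b = b) {S : Finset (ℝ × ℝ)}
    (hS : NestFam H a b S) (hne : S.Nonempty) : ∃ c d, a ≤ c ∧ c < d ∧ d ≤ b ∧
      (∀ k ∈ H, ap k c = c) ∧ (∀ k ∈ H, ap k d = d) ∧ Ioo c d ⊆ GSupp H ∧ NestFam H c d S := by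
  obtain ⟨s, hs⟩ := hne
  obtain ⟨h1, h2, h, hh, ho⟩ := hS.1 s hs
  obtain ⟨x, hx1, hx2⟩ := exists_between ho.lt
  obtain ⟨c, d, hac, hcx, hxd, hdb, hc, hd, hK⟩ := group_orbital hH ha hb (h1.trans_lt hx1)
    (hx2.trans_le h2) (mem_gsupp.2 ⟨h, hh, ho.mv hx1 hx2⟩)
  have hsc : c ≤ s.1 := ho.le_left (hc h hh) hx2 hcx.le
  have hsd : s.2 ≤ d := ho.right_le (hd h hh) hx1 hxd.le
  refine ⟨c, d, hac, hcx.trans hxd, hdb, hc, hd, hK, fun t ht => ?_, hS.2⟩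
  obtain ⟨h1', h2', h', hh', ho'⟩ := hS.1 t ht
  obtain ⟨y, hy1, hy2, hy3, hy4⟩ : ∃ y, t.1 < y ∧ y < t.2 ∧ s.1 < y ∧ y < s.2 := by
    rcases hS.2 s hs t ht with h | h
    · have := h ⟨hx1, hx2⟩
      exact ⟨x, this.1, this.2, hx1, hx2⟩
    · obtain ⟨y, hy1, hy2⟩ := exists_between ho'.lt
      have := h ⟨hy1, hy2⟩
      exact ⟨y, hy1, hy2, this.1, this.2⟩
  exact ⟨ho'.le_left (hc h' hh') hy2 (by linarith), ho'.right_le (hd h' hh') hy1 (by linarith),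
    h', hh', ho'⟩

lemma BreakRep.sub {H : Subgroup PermR} {a b c d : ℝ} {F : Finset ℝ} (h : BreakRep H a b F)
    (h1 : a ≤ c) (h2 : d ≤ b) : BreakRep H c d F :=
  fun k hk p hp h3 h4 => h k hk p hp (by linarith) (by linarith)

lemma main_induction {G : Subgroup PermR} (hG : AllPL G) (hn : ¬ AdmitsTransitionChain G) (N : ℕ) :
    ∀ H : Subgroup PermR, H ≤ G → ∀ a b : ℝ, 0 ≤ a → b ≤ 1 →
    (∀ h ∈ H, ap h a = a) → (∀ h ∈ H, ap h b = b) → ∀ F : Finset ℝ, F.card ≤ N →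
    BreakRep H a b F →
    (∀ x ∈ Ioo a b, ∀ h ∈ dn N H, ap h x = x) ∧ (∀ S, NestFam H a b S → S.card ≤ N) := by
  induction N with
  | zero =>
    intro H hHG a b h0 h1 ha hb F hF hB
    have hF0 : F = ∅ := Finset.card_eq_zero.1 (Nat.le_zero.1 hF)
    subst hF0
    have key : ∀ x ∈ Ioo a b, ∀ h ∈ H, ap h x = x := by
      intro x hx h hh
      refine eq_id_of_no_break (hG h (hHG hh)) (hx.1.trans hx.2) h0 h1 ?_ (ha h hh) (hb h hh) x
        hx.1.le hx.2.le
      intro z hz1 hz2 hz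
      obtain ⟨y, hy, -⟩ := hB h hh z hz hz1 hz2
      simp at hy
    refine ⟨key, fun S hS => ?_⟩
    rw [Nat.le_zero, Finset.card_eq_zero, Finset.eq_empty_iff_forall_notMem]
    intro s hs
    obtain ⟨h1, h2, h, hh, ho⟩ := hS.1 s hs
    obtain ⟨x, hx1, hx2⟩ := exists_between ho.lt
    exact ho.mv hx1 hx2 (key x ⟨h1.trans_lt hx1, hx2.trans_le h2⟩ h hh)
  | succ N ih =>
    -- the case of a group orbital
    have core : ∀ H : Subgroup PermR, H ≤ G → ∀ a b : ℝ, a < b → 0 ≤ a → b ≤ 1 →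
        (∀ h ∈ H, ap h a = a) → (∀ h ∈ H, ap h b = b) → Ioo a b ⊆ GSupp H →
        ∀ F : Finset ℝ, F.card ≤ N + 1 → BreakRep H a b F →
        (∀ x ∈ Ioo a b, ∀ h ∈ dn (N + 1) H, ap h x = x) ∧
          (∀ S, NestFam H a b S → S.card ≤ N + 1) := by
      intro H hHG a b hab h0 h1 ha hb hs F hF hB
      have hH : AllPL H := hG.anti hHG
      set K := kerR H hH a ha with hKdef
      have hKH : K ≤ H := fun k hk => hk.1
      have hKP : AllPL K := hH.anti hKH
      have step : ∀ c d, a ≤ c → c < d → d ≤ b → (∀ k ∈ K, ap k c = c) → (∀ k ∈ K, ap k d = d) →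
          Ioo c d ⊆ GSupp K → (∀ x ∈ Ioo c d, ∀ h ∈ dn N K, ap h x = x) ∧
            (∀ S, NestFam K c d S → S.card ≤ N) := by
        intro c d hac hcd hdb hc hd hK
        obtain ⟨F1, hF1, hB1⟩ := core_orbital hG hn hHG hH hab h0 ha hb hs hB hac hcd hdb hc hd hK
        exact ih K (hKH.trans hHG) c d (h0.trans hac) (hdb.trans h1) hc hd F1 (by omega) hB1
      have haK : ∀ k ∈ K, ap k a = a := fun k hk => ha k (hKH hk)
      have hbK : ∀ k ∈ K, ap k b = b := fun k hk => hb k (hKH hk)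
      constructor
      · intro x hx h hh
        have hh' : h ∈ dn N K := by
          rw [dn_succ] at hh
          exact dn_mono N (commutator_le_kerR hH ha) hh
        by_cases hxK : x ∈ GSupp K
        · obtain ⟨c, d, hac, hcx, hxd, hdb, hc, hd, hK⟩ := group_orbital hKP haK hbK hx.1 hx.2 hxK
          exact (step c d hac (hcx.trans hxd) hdb hc hd hK).1 x ⟨hcx, hxd⟩ h hh'
        · exact notMem_gsupp.1 hxK h (dn_le N K hh')
      · intro S hS
        classical
        have hS' : NestFam K a b (S.erase (a, b)) := by
          refine ⟨fun s hs' => ?_, fun s hs' t ht =>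
            hS.2 s (Finset.mem_of_mem_erase hs') t (Finset.mem_of_mem_erase ht)⟩
          obtain ⟨h2, h3, h, hh, ho⟩ := hS.1 s (Finset.mem_of_mem_erase hs')
          refine ⟨h2, h3, h, ?_, ho⟩
          by_contra hk
          have hfull := full_orbital hG hn hHG hab ha hb hs hh fun ht => hk ⟨hh, ht⟩
          obtain ⟨x, hx1, hx2⟩ := exists_between ho.lt
          obtain ⟨e1, e2⟩ := ho.unique hfull hx1 hx2 (h2.trans_lt hx1) (hx2.trans_le h3)
          exact Finset.ne_of_mem_erase hs' (Prod.ext e1 e2)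
        have hcard : (S.erase (a, b)).card ≤ N := by
          rcases (S.erase (a, b)).eq_empty_or_nonempty with he | hne
          · rw [he]; simp
          · obtain ⟨c, d, hac, hcd, hdb, hc, hd, hK, hN⟩ := hS'.locate hKP haK hbK hne
            exact (step c d hac hcd hdb hc hd hK).2 _ hN
        have := Finset.pred_card_le_card_erase (s := S) (a := (a, b))
        omega
    intro H hHG a b h0 h1 ha hb F hF hB
    have hH : AllPL H := hG.anti hHG
    constructor
    · intro x hx h hh
      by_cases hxK : x ∈ GSupp H
      · obtain ⟨c, d, hac, hcx, hxd, hdb, hc, hd, hK⟩ := group_orbital hH ha hb hx.1 hx.2 hxK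
        exact (core H hHG c d (hcx.trans hxd) (h0.trans hac) (hdb.trans h1) hc hd hK F hF
          (hB.sub hac hdb)).1 x ⟨hcx, hxd⟩ h hh
      · exact notMem_gsupp.1 hxK h (dn_le _ H hh)
    · intro S hS
      rcases S.eq_empty_or_nonempty with he | hne
      · rw [he]; simp
      · obtain ⟨c, d, hac, hcd, hdb, hc, hd, hK, hN⟩ := hS.locate hH ha hb hne
        exact (core H hHG c d hcd (h0.trans hac) (hdb.trans h1) hc hd hK F hF
          (hB.sub hac hdb)).2 S hN

lemma affine_mul {g h : PermR} (hg : Continuous (ap g)) {p : ℝ} (h1 : IsLocallyAffineAt g p)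
    (h2 : IsLocallyAffineAt h (ap g p)) : IsLocallyAffineAt (g * h) p := by
  obtain ⟨m, b, H1⟩ := h1
  obtain ⟨n, c, H2⟩ := h2
  refine ⟨n * m, n * b + c, ?_⟩
  filter_upwards [H1, (hg.tendsto p).eventually H2] with y e1 e2
  rw [ap_mul, e2, e1]; ring

lemma affine_inv {g : PermR} (hg' : Continuous (ap g⁻¹)) {p : ℝ}
    (h1 : IsLocallyAffineAt g (ap g⁻¹ p)) : IsLocallyAffineAt g⁻¹ p := by
  obtain ⟨m, b, H1⟩ := h1
  have hm : m ≠ 0 := by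
    rintro rfl
    obtain ⟨y, hy, hy2⟩ := ((H1.filter_mono nhdsWithin_le_nhds).and
      (self_mem_nhdsWithin : Ioi (ap g⁻¹ p) ∈ 𝓝[>] (ap g⁻¹ p))).exists
    have := H1.self_of_nhds
    have e : ap g y = ap g (ap g⁻¹ p) := by rw [hy, this]; ring
    exact (ne_of_gt hy2) (ap_inj g e)
  refine ⟨m⁻¹, -m⁻¹ * b, ?_⟩
  filter_upwards [(hg'.tendsto p).eventually H1] with y e1
  rw [ap_ap_inv] at e1
  field_simp
  linarith

lemma IsPL.mem_Ioo {g : PermR} (hg : IsPL g) {p : ℝ} (hp : p ∈ Ioo (0:ℝ) 1) :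
    ap g p ∈ Ioo (0:ℝ) 1 := by
  have h1 := hg.mono hp.1
  have h2 := hg.mono hp.2
  rw [hg.fix_le le_rfl] at h1
  rw [hg.fix_ge le_rfl] at h2
  exact ⟨h1, h2⟩

lemma initial_rep (X : Set PermR) (hXfin : X.Finite)
    (hPL : AllPL (Subgroup.closure X)) : ∃ F : Finset ℝ, BreakRep (Subgroup.closure X) 0 1 F := by
  have hfin : (⋃ x ∈ X, Breakpoints x).Finite :=
    hXfin.biUnion fun x hx => (hPL x (Subgroup.subset_closure hx)).2.2
  refine ⟨hfin.toFinset, fun h hh => ?_⟩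
  suffices H : ∀ p ∈ Breakpoints h, ∃ y ∈ hfin.toFinset, ∃ g ∈ Subgroup.closure X, ap g y = p from
    fun p hp _ _ => H p hp
  induction hh using Subgroup.closure_induction with
  | mem x hx =>
    intro p hp
    refine ⟨p, ?_, 1, one_mem _, rfl⟩
    rw [Set.Finite.mem_toFinset]
    exact mem_biUnion hx hp
  | one =>
    rintro p ⟨-, hp⟩
    exact absurd ⟨1, 0, Eventually.of_forall fun y => by rw [ap_one]; ring⟩ hp
  | mul g h hg hh ihg ihh =>
    rintro p ⟨hp, hp'⟩
    by_cases h1 : IsLocallyAffineAt g p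
    · have h2 : ¬ IsLocallyAffineAt h (ap g p) := fun h2 => hp' (affine_mul (hPL g hg).cont h1 h2)
      obtain ⟨y, hy, f, hf, e⟩ := ihh (ap g p) ⟨(hPL g hg).mem_Ioo hp, h2⟩
      exact ⟨y, hy, f * g⁻¹, mul_mem hf (inv_mem hg), by rw [ap_mul, e, ap_inv_ap]⟩
    · exact ihg p ⟨hp, h1⟩
  | inv g hg ih =>
    rintro p ⟨hp, hp'⟩
    have hP := hPL _ (inv_mem hg)
    obtain ⟨y, hy, f, hf, e⟩ := ih (ap g⁻¹ p) ⟨hP.mem_Ioo hp, fun h => hp' (affine_inv hP.cont h)⟩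
    exact ⟨y, hy, f * g, mul_mem hf hg, by rw [ap_mul, e, ap_ap_inv]⟩

lemma tower_of_leftOverlap {G : Subgroup PermR} (hG : AllPL G) (h : LeftOverlap G) :
    AdmitsInfiniteTower G := by
  obtain ⟨g, hg, h, hh, a, b, c, hac, hcb, h1, h2⟩ := h
  have main : ∀ g ∈ G, IsOrbital g a b → (∀ z, a < z → z < b → z < ap g z) →
      AdmitsInfiniteTower G := by
    intro g hg h1 hd
    have hmem : ∀ n : ℕ, a < ap (g ^ n) c ∧ ap (g ^ n) c < b := by
      intro n
      induction n with
      | zero => exact ⟨hac, hcb⟩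
      | succ n ih => rw [pow_succ, ap_mul]; exact h1.mem_ap (hG g hg) ih.1 ih.2
    have hfa : ∀ n : ℕ, ap (g ^ n) a = a := by
      intro n
      induction n with
      | zero => rfl
      | succ n ih => rw [pow_succ, ap_mul, ih, h1.fl]
    have hmono : StrictMono fun n : ℕ => ap (g ^ n) c := by
      refine strictMono_nat_of_lt_succ fun n => ?_
      rw [pow_succ, ap_mul]
      exact hd _ (hmem n).1 (hmem n).2
    let f : ℕ → (ℝ × ℝ) × PermR := fun n => ((a, ap (g ^ n) c), (g ^ n)⁻¹ * h * g ^ n)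
    have hinj : ∀ m n, (f m).1 = (f n).1 → m = n := fun m n e =>
      hmono.injective (congrArg Prod.snd e)
    refine ⟨range f, ⟨⟨?_, ?_, ?_⟩, ?_⟩, infinite_range_of_injective fun m n e =>
      hinj m n (congrArg Prod.fst e)⟩
    · rintro _ ⟨n, rfl⟩
      have := h2.conj (hG _ (G.pow_mem hg n)).mono
      rw [hfa n] at this
      exact this
    · rintro _ ⟨m, rfl⟩ _ ⟨n, rfl⟩
      rcases le_total m n with h | h
      · left; exact Ioo_subset_Ioo_right (hmono.monotone h)
      · right; exact Ioo_subset_Ioo_right (hmono.monotone h)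
    · rintro _ ⟨m, rfl⟩ _ ⟨n, rfl⟩ e
      rw [hinj m n e]
    · rintro _ ⟨n, rfl⟩
      exact G.mul_mem (G.mul_mem (G.inv_mem (G.pow_mem hg n)) hh) (G.pow_mem hg n)
  rcases h1.dir (hG g hg) with hd | hd
  · refine main g⁻¹ (G.inv_mem hg) h1.inv fun z hz1 hz2 => ?_
    have hm := h1.inv.mem_ap (hG _ (G.inv_mem hg)) hz1 hz2
    have := hd _ hm.1 hm.2
    rwa [ap_ap_inv] at this
  · exact main g hg h1 hd

theorem statement0 (X : Set PermR) (hXfin : X.Finite)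
    (G : Subgroup PermR) (hG : G = Subgroup.closure X)
    (hPL : ∀ g ∈ G, IsPL g) :
    List.TFAE [¬ IsSolvable ↥G, AdmitsTransitionChain G,
      AdmitsOneSidedOverlap G, AdmitsInfiniteTower G] := by
  have hA : AllPL G := hPL
  have hmain : ¬ AdmitsTransitionChain G → ∃ N : ℕ,
      (∀ x ∈ Ioo (0:ℝ) 1, ∀ h ∈ dn N G, ap h x = x) ∧ (∀ S, NestFam G 0 1 S → S.card ≤ N) := by
    intro hn
    obtain ⟨F, hF⟩ := initial_rep X hXfin (hG ▸ hA)
    rw [← hG] at hF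
    exact ⟨F.card, main_induction hA hn F.card G le_rfl 0 1 le_rfl le_rfl
      (fun h hh => (hPL h hh).fix_le le_rfl) (fun h hh => (hPL h hh).fix_ge le_rfl) F le_rfl hF⟩
  tfae_have 1 → 2 := by
    intro h
    by_contra hn
    obtain ⟨N, hN, -⟩ := hmain hn
    refine h ((solvable_iff G).2 ⟨N, ?_⟩)
    rw [Subgroup.eq_bot_iff_forall]
    intro k hk
    refine ext_ap fun x => ?_
    rw [ap_one]
    by_cases hx : x ∈ Ioo (0:ℝ) 1
    · exact hN x hx k hk
    · exact (hPL k (dn_le N G hk)).2.1 x hx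
  tfae_have 2 → 1 := by
    intro h hs
    obtain ⟨n, hn⟩ := (solvable_iff G).1 hs
    exact noChain_of_dn n G hA hn h
  tfae_have 2 → 3 := fun h => (leftOverlap_of_chain hA h).overlap
  tfae_have 3 → 2 := chain_of_overlap hA
  tfae_have 2 → 4 := fun h => tower_of_leftOverlap hA (leftOverlap_of_chain hA h)
  tfae_have 4 → 2 := by
    rintro ⟨T, ⟨⟨hT1, hT2, hT3⟩, hTG⟩, hinf⟩
    by_contra hn
    obtain ⟨N, -, hN⟩ := hmain hn
    have hinj : InjOn Prod.fst T := fun p hp q hq e => Prod.ext e (hT3 p hp q hq e)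
    obtain ⟨S, hST, hS⟩ := (hinf.image hinj).exists_subset_card_eq (N + 1)
    have : S.card ≤ N := by
      refine hN S ⟨fun s hs => ?_, fun s hs t ht => ?_⟩
      · obtain ⟨p, hp, rfl⟩ := hST hs
        have hb := (hT1 p hp).bounds (hPL _ (hTG p hp))
        exact ⟨hb.1, hb.2, p.2, hTG p hp, hT1 p hp⟩
      · obtain ⟨p, hp, rfl⟩ := hST hs
        obtain ⟨q, hq, rfl⟩ := hST ht
        exact hT2 p hp q hq
    omega
  tfae_finish

end PLPaper
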